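/- arXiv:1206.6598 — 6 statements merged into one kernel-verified Lean document; each statement's English description precedes it below -/
import Mathlib

section
/- In the spherically symmetric extremal-horizon reduction setting, assume in addition that D''(r_H) = 2·K(r_H). Then for every l ∈ ℕ there exist real constants β₀, β₁, …, β_l, depending only on l and on the functions D and K, such that for every solution u of the l-th reduced wave equation, the function v ↦ (∂ᵣ^{l+1}u)(v, r_H) + Σ_{i=0}^{l} βᵢ·(∂ᵣ^{i}u)(v, r_H) is constant on ℝ (a hierarchy of conservation laws along the extremal horizon {r = r_H}). -/
/-! Write `aⱼ(v) = (∂ᵣʲu)(v, r_H)`. Differentiating the reduced wave equation `k` times in `r` and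
evaluating at `r_H` gives, since `D` and `D'` vanish there, a relation in which the undifferentiated
terms `a_{k+2}` and `a_{k+1}` drop out and the coefficient of `a_k` is
`C(k,2) D'' + k D'' - l(l+1) K = (k(k+1) - l(l+1)) K`:

  `(k(k+1) - l(l+1)) K(r_H) a_k + ∑_{j<k} p_{kj} a_j + 2 a'_{k+1} + ∑_{j≤k} q_{kj} a'_j = 0`

(`horizon_relation`). For `k < l` the coefficient of `a_k` is nonzero, so inductively each
`a_0, …, a_{l-1}` is a linear combination of `a'_0, …, a'_l`; for `k = l` it vanishes, and substituting
these combinations shows that `a'_{l+1}` is itself a combination of `a'_0, …, a'_l`, with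
coefficients determined by `D`, `K` and `l` only (`exists_elimination`). This is the assertion that the
derivative in `v` of the conserved quantity vanishes. The identification of `∂ᵣʲ∂ᵥu` with the
`v`-derivative of `∂ᵣʲu` is the symmetry of second derivatives (`pr_iterate_pv`). -/

noncomputable section

open Real Set Filter

/-- Partial derivative in the first slot (`v`) of a function of two real variables. -/
def pv (u : ℝ → ℝ → ℝ) : ℝ → ℝ → ℝ := fun v r => deriv (fun t => u t r) v

/-- Partial derivative in the second slot (`r`) of a function of two real variables. -/
def pr (u : ℝ → ℝ → ℝ) : ℝ → ℝ → ℝ := fun v r => deriv (fun t => u v t) r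

/-- The `l`-th reduced wave equation on the spherically symmetric spacetime
`g = -D(r) dv² + 2 dv dr + K(r)⁻¹ g_{S²}`, for a smooth `u : ℝ × I → ℝ`. -/
def IsReducedWaveSol (I : Set ℝ) (D K : ℝ → ℝ) (l : ℕ) (u : ℝ → ℝ → ℝ) : Prop :=
  ContDiffOn ℝ (⊤ : ℕ∞) (fun p : ℝ × ℝ => u p.1 p.2) (univ ×ˢ I) ∧
  ∀ v : ℝ, ∀ r ∈ I,
    D r * pr (pr u) v r + 2 * pv (pr u) v r
      + (-(deriv K r) / K r) * pv u v r
      + ((-(deriv K r) / K r) * D r + deriv D r) * pr u v r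
      - (l : ℝ) * ((l : ℝ) + 1) * K r * u v r = 0

/-! ### Partial derivatives of smooth functions of two variables -/

/-- Joint smoothness on `ℝ × I` of a function of two real variables. -/
def SmoothOnStrip (I : Set ℝ) (w : ℝ → ℝ → ℝ) : Prop :=
  ContDiffOn ℝ (⊤ : ℕ∞) (fun p : ℝ × ℝ => w p.1 p.2) (univ ×ˢ I)

lemma SmoothOnStrip.contDiffAt {I : Set ℝ} (hI : IsOpen I) {w : ℝ → ℝ → ℝ}
    (hw : SmoothOnStrip I w) (v : ℝ) {r : ℝ} (hr : r ∈ I) :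
    ContDiffAt ℝ (⊤ : ℕ∞) (fun p : ℝ × ℝ => w p.1 p.2) (v, r) :=
  ContDiffOn.contDiffAt hw ((isOpen_univ.prod hI).mem_nhds ⟨mem_univ _, hr⟩)

lemma pr_eq_fderiv {w : ℝ → ℝ → ℝ} {v r : ℝ}
    (h : DifferentiableAt ℝ (fun p : ℝ × ℝ => w p.1 p.2) (v, r)) :
    pr w v r = fderiv ℝ (fun p : ℝ × ℝ => w p.1 p.2) (v, r) (0, 1) := by
  have h2 : HasDerivAt (fun t : ℝ => (v, t)) ((0 : ℝ), (1 : ℝ)) r :=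
    (hasDerivAt_const r v).prodMk (hasDerivAt_id r)
  exact (h.hasFDerivAt.comp_hasDerivAt r h2).deriv

lemma pv_eq_fderiv {w : ℝ → ℝ → ℝ} {v r : ℝ}
    (h : DifferentiableAt ℝ (fun p : ℝ × ℝ => w p.1 p.2) (v, r)) :
    pv w v r = fderiv ℝ (fun p : ℝ × ℝ => w p.1 p.2) (v, r) (1, 0) := by
  have h2 : HasDerivAt (fun t : ℝ => (t, r)) ((1 : ℝ), (0 : ℝ)) v :=
    (hasDerivAt_id v).prodMk (hasDerivAt_const v r)
  exact (h.hasFDerivAt.comp_hasDerivAt v h2).deriv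

lemma SmoothOnStrip.differentiableAt {I : Set ℝ} (hI : IsOpen I) {w : ℝ → ℝ → ℝ}
    (hw : SmoothOnStrip I w) (v : ℝ) {r : ℝ} (hr : r ∈ I) :
    DifferentiableAt ℝ (fun p : ℝ × ℝ => w p.1 p.2) (v, r) :=
  (hw.contDiffAt hI v hr).differentiableAt (by simp)

lemma SmoothOnStrip.fderiv_apply {I : Set ℝ} (hI : IsOpen I) {w : ℝ → ℝ → ℝ}
    (hw : SmoothOnStrip I w) (e : ℝ × ℝ) :
    ContDiffOn ℝ (⊤ : ℕ∞) (fun p => fderiv ℝ (fun p : ℝ × ℝ => w p.1 p.2) p e) (univ ×ˢ I) :=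
  (ContDiffOn.fderiv_of_isOpen (m := (⊤ : ℕ∞)) hw (isOpen_univ.prod hI) (by simp)).clm_apply
    contDiffOn_const

lemma SmoothOnStrip.pr {I : Set ℝ} (hI : IsOpen I) {w : ℝ → ℝ → ℝ}
    (hw : SmoothOnStrip I w) : SmoothOnStrip I (pr w) :=
  (hw.fderiv_apply hI (0, 1)).congr fun p hp =>
    pr_eq_fderiv (hw.differentiableAt hI p.1 hp.2)

lemma SmoothOnStrip.pv {I : Set ℝ} (hI : IsOpen I) {w : ℝ → ℝ → ℝ}
    (hw : SmoothOnStrip I w) : SmoothOnStrip I (pv w) :=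
  (hw.fderiv_apply hI (1, 0)).congr fun p hp =>
    pv_eq_fderiv (hw.differentiableAt hI p.1 hp.2)

lemma SmoothOnStrip.pr_iterate {I : Set ℝ} (hI : IsOpen I) {w : ℝ → ℝ → ℝ}
    (hw : SmoothOnStrip I w) (k : ℕ) : SmoothOnStrip I (_root_.pr^[k] w) := by
  induction k with
  | zero => exact hw
  | succ k ih => rw [Function.iterate_succ_apply']; exact ih.pr hI

lemma SmoothOnStrip.contDiffAt_slice {I : Set ℝ} (hI : IsOpen I) {w : ℝ → ℝ → ℝ}
    (hw : SmoothOnStrip I w) (v : ℝ) {r : ℝ} (hr : r ∈ I) :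
    ContDiffAt ℝ (⊤ : ℕ∞) (w v) r :=
  (hw.contDiffAt hI v hr).comp r (contDiffAt_const.prodMk contDiffAt_id)

lemma SmoothOnStrip.hasDerivAt_pv {I : Set ℝ} (hI : IsOpen I) {w : ℝ → ℝ → ℝ}
    (hw : SmoothOnStrip I w) (v : ℝ) {r : ℝ} (hr : r ∈ I) :
    HasDerivAt (fun t => w t r) (_root_.pv w v r) v := by
  have h : DifferentiableAt ℝ (fun t => w t r) v :=
    DifferentiableAt.comp (g := fun p : ℝ × ℝ => w p.1 p.2) (f := fun t => (t, r)) v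
      (hw.differentiableAt hI v hr) (differentiableAt_id.prodMk (differentiableAt_const r))
  exact h.hasDerivAt

lemma iteratedDeriv_slice (w : ℝ → ℝ → ℝ) (v : ℝ) (k : ℕ) :
    iteratedDeriv k (w v) = (pr^[k] w) v := by
  induction k with
  | zero => simp
  | succ k ih => rw [iteratedDeriv_succ, ih, Function.iterate_succ_apply']; rfl

/-- Symmetry of the mixed second derivatives. -/
lemma pr_pv_comm {I : Set ℝ} (hI : IsOpen I) {w : ℝ → ℝ → ℝ}
    (hw : SmoothOnStrip I w) (v : ℝ) {r : ℝ} (hr : r ∈ I) :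
    pr (pv w) v r = pv (pr w) v r := by
  have hsymm := (hw.contDiffAt hI v hr).isSymmSndFDerivAt
    (by simpa using (by exact_mod_cast le_top : ((2 : ℕ∞) : WithTop ℕ∞) ≤ ((⊤ : ℕ∞) : WithTop ℕ∞)))
  have hd : DifferentiableAt ℝ (fderiv ℝ (fun p : ℝ × ℝ => w p.1 p.2)) (v, r) :=
    ((hw.contDiffAt hI v hr).fderiv_right (m := (⊤ : ℕ∞)) (by simp)).differentiableAt (by simp)
  have hnhds : univ ×ˢ I ∈ nhds (v, r) := (isOpen_univ.prod hI).mem_nhds ⟨mem_univ _, hr⟩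
  have h1 : (fun p : ℝ × ℝ => pv w p.1 p.2) =ᶠ[nhds (v, r)]
      fun p => fderiv ℝ (fun p : ℝ × ℝ => w p.1 p.2) p (1, 0) := by
    filter_upwards [hnhds] with p hp
    exact pv_eq_fderiv (hw.differentiableAt hI p.1 hp.2)
  have h2 : (fun p : ℝ × ℝ => pr w p.1 p.2) =ᶠ[nhds (v, r)]
      fun p => fderiv ℝ (fun p : ℝ × ℝ => w p.1 p.2) p (0, 1) := by
    filter_upwards [hnhds] with p hp
    exact pr_eq_fderiv (hw.differentiableAt hI p.1 hp.2)
  rw [pr_eq_fderiv ((hw.pv hI).differentiableAt hI v hr),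
    pv_eq_fderiv ((hw.pr hI).differentiableAt hI v hr), h1.fderiv_eq, h2.fderiv_eq,
    fderiv_clm_apply hd (differentiableAt_const _), fderiv_clm_apply hd (differentiableAt_const _)]
  simpa using hsymm (0, 1) (1, 0)

lemma pr_iterate_pv {I : Set ℝ} (hI : IsOpen I) {w : ℝ → ℝ → ℝ}
    (hw : SmoothOnStrip I w) (k : ℕ) (v : ℝ) {r : ℝ} (hr : r ∈ I) :
    (pr^[k] (pv w)) v r = pv (pr^[k] w) v r := by
  induction k generalizing r with
  | zero => rfl
  | succ k ih =>
    rw [Function.iterate_succ_apply', Function.iterate_succ_apply',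
      ← pr_pv_comm hI (hw.pr_iterate hI k) v hr]
    refine Filter.EventuallyEq.deriv_eq ?_
    filter_upwards [hI.mem_nhds hr] with s hs
    exact ih hs

/-- The Leibniz rule for the `r`-derivatives of a coefficient times a slice, summed over the order of
the derivative falling on the slice. -/
lemma iteratedDeriv_mul_slice {I : Set ℝ} (hI : IsOpen I) {F : ℝ → ℝ} {w : ℝ → ℝ → ℝ}
    (hw : SmoothOnStrip I w) (v : ℝ) {r : ℝ} (hr : r ∈ I)
    (hF : ContDiffAt ℝ (⊤ : ℕ∞) F r) (k : ℕ) :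
    iteratedDeriv k (fun s => F s * w v s) r =
      ∑ j ∈ Finset.range (k + 1),
        (k.choose j : ℝ) * iteratedDeriv (k - j) F r * (pr^[j] w) v r := by
  have hle : ((k : ℕ∞) : WithTop ℕ∞) ≤ ((⊤ : ℕ∞) : WithTop ℕ∞) := by
    exact_mod_cast le_top
  have h := iteratedDeriv_mul (n := k) (hF.of_le hle)
    ((hw.contDiffAt_slice hI v hr).of_le hle)
  change iteratedDeriv k (F * w v) r = _
  rw [h, ← Finset.sum_range_reflect]
  refine Finset.sum_congr rfl fun j hj => ?_
  have hj' : j ≤ k := Nat.lt_succ_iff.mp (Finset.mem_range.mp hj)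
  have e : k + 1 - 1 - j = k - j := by omega
  rw [e, Nat.choose_symm hj', Nat.sub_sub_self hj', iteratedDeriv_slice]

/-! ### Elimination of the undifferentiated terms -/

/-- If for each `k ≤ l` a linear relation expresses `m k * a k` through `a j` (`j < k`) and
`b 0, …, b (k+1)`, with `m k ≠ 0` for `k < l` but `m l = 0`, then eliminating `a` leaves a
linear relation among `b 0, …, b (l+1)` whose coefficients do not depend on `(a, b)`. -/
lemma exists_elimination (l : ℕ) (m : ℕ → ℝ) (p q : ℕ → ℕ → ℝ)
    (hm : ∀ k < l, m k ≠ 0) (hl : m l = 0) :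
    ∃ γ : ℕ → ℝ, ∀ a b : ℕ → ℝ,
      (∀ k ≤ l, m k * a k + ∑ j ∈ Finset.range k, p k j * a j + 2 * b (k + 1)
        + ∑ j ∈ Finset.range (k + 1), q k j * b j = 0) →
      b (l + 1) + ∑ j ∈ Finset.range (l + 1), γ j * b j = 0 := by
  -- `A k`, `B k` are the coordinate functions on the set `X` of pairs satisfying the relations.
  let X := {x : (ℕ → ℝ) × (ℕ → ℝ) // ∀ k ≤ l, m k * x.1 k
    + ∑ j ∈ Finset.range k, p k j * x.1 j + 2 * x.2 (k + 1)
        + ∑ j ∈ Finset.range (k + 1), q k j * x.2 j = 0}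
  let A : ℕ → X → ℝ := fun k x => x.1.1 k
  let B : ℕ → X → ℝ := fun k x => x.1.2 k
  let S : Submodule ℝ (X → ℝ) := Submodule.span ℝ (range fun j : Fin (l + 1) => B j)
  have hB : ∀ j ≤ l, B j ∈ S := fun j hj =>
    Submodule.subset_span ⟨⟨j, Nat.lt_succ_of_le hj⟩, rfl⟩
  have hrel : ∀ k ≤ l, m k • A k + ∑ j ∈ Finset.range k, p k j • A j + (2 : ℝ) • B (k + 1)
      + ∑ j ∈ Finset.range (k + 1), q k j • B j = 0 := by
    intro k hk
    funext x
    simpa [A, B] using x.2 k hk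
  have hQ : ∀ k ≤ l, ∑ j ∈ Finset.range (k + 1), q k j • B j ∈ S := fun k hk =>
    S.sum_mem fun j hj => S.smul_mem _ (hB j (by have := Finset.mem_range.mp hj; omega))
  have hA : ∀ k < l, A k ∈ S := by
    intro k
    induction k using Nat.strong_induction_on with
    | _ k ih =>
      intro hk
      have hP : ∑ j ∈ Finset.range k, p k j • A j ∈ S :=
        S.sum_mem fun j hj => S.smul_mem _
          (ih j (Finset.mem_range.mp hj) ((Finset.mem_range.mp hj).trans hk))
      have h2 := S.smul_mem (2 : ℝ) (hB (k + 1) hk)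
      have hmem : m k • A k ∈ S := by
        have e : m k • A k = -(∑ j ∈ Finset.range k, p k j • A j + (2 : ℝ) • B (k + 1)
            + ∑ j ∈ Finset.range (k + 1), q k j • B j) := by
          rw [eq_neg_iff_add_eq_zero, ← hrel k hk.le]; abel
        rw [e]
        exact S.neg_mem (S.add_mem (S.add_mem hP h2) (hQ k hk.le))
      exact (S.smul_mem_iff (hm k hk)).mp hmem
  have hlast : -B (l + 1) ∈ S := by
    have hP : ∑ j ∈ Finset.range l, p l j • A j ∈ S :=
      S.sum_mem fun j hj => S.smul_mem _ (hA j (Finset.mem_range.mp hj))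
    have e : (2 : ℝ) • (-B (l + 1)) = ∑ j ∈ Finset.range l, p l j • A j
        + ∑ j ∈ Finset.range (l + 1), q l j • B j := by
      have h := hrel l le_rfl
      rw [hl, zero_smul, zero_add] at h
      rw [smul_neg, neg_eq_iff_add_eq_zero, ← h]; abel
    refine (S.smul_mem_iff (two_ne_zero (α := ℝ))).mp ?_
    rw [e]
    exact S.add_mem hP (hQ l le_rfl)
  obtain ⟨c, hc⟩ := (Submodule.mem_span_range_iff_exists_fun ℝ).mp hlast
  refine ⟨fun j => if h : j < l + 1 then c ⟨j, h⟩ else 0, fun a b hab => ?_⟩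
  have h := congrFun hc ⟨(a, b), hab⟩
  rw [Finset.sum_range]
  simp only [Fin.is_lt, dite_true, Fin.eta]
  simp only [B, Finset.sum_apply, Pi.smul_apply, smul_eq_mul, Pi.neg_apply] at h
  linarith

/-! ### The differentiated equation on the horizon -/

/-- Coefficient of `a m` in the Leibniz sum `∑ⱼ C(k,j) c (k-j) a (j+s)`: it is
`C(k, m-s) c (k+s-m)` for `m ≥ s`, and `0` otherwise. -/
def shiftCoeff (s : ℕ) (c : ℕ → ℝ) (k m : ℕ) : ℝ :=
  if s ≤ m then (k.choose (m - s) : ℝ) * c (k + s - m) else 0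

lemma sum_shiftCoeff (s : ℕ) (c a : ℕ → ℝ) (k : ℕ) :
    ∑ j ∈ Finset.range (k + 1), (k.choose j : ℝ) * c (k - j) * a (j + s) =
      ∑ m ∈ Finset.range (s + (k + 1)), shiftCoeff s c k m * a m := by
  rw [Finset.sum_range_add (fun m => shiftCoeff s c k m * a m)]
  have h0 : ∑ m ∈ Finset.range s, shiftCoeff s c k m * a m = 0 :=
    Finset.sum_eq_zero fun m hm => by
      have := Finset.mem_range.mp hm
      simp [shiftCoeff, this]
  rw [h0, zero_add]
  refine Finset.sum_congr rfl fun j _ => ?_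
  have e : k + s - (s + j) = k - j := by omega
  simp [shiftCoeff, e, add_comm j s]

lemma shiftCoeff_diag (s : ℕ) (c : ℕ → ℝ) (k : ℕ) :
    shiftCoeff s c k k = (k.choose s : ℝ) * c s := by
  unfold shiftCoeff
  split_ifs with h
  · rw [Nat.choose_symm h, Nat.add_sub_cancel_left]
  · rw [Nat.choose_eq_zero_of_lt (not_le.mp h)]; simp

lemma shiftCoeff_eq_zero {s : ℕ} {c : ℕ → ℝ} {k m : ℕ} (h : c (k + s - m) = 0) :
    shiftCoeff s c k m = 0 := by
  simp [shiftCoeff, h]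

/-- The `k`-th `r`-derivative of the reduced wave equation at the degenerate horizon. -/
lemma horizon_relation {I : Set ℝ} (hI : IsOpen I) {rH : ℝ} (hrH : rH ∈ I) {D B R K : ℝ → ℝ}
    (hD : ContDiffAt ℝ (⊤ : ℕ∞) D rH) (hB : ContDiffAt ℝ (⊤ : ℕ∞) B rH)
    (hR : ContDiffAt ℝ (⊤ : ℕ∞) R rH) (hK : ContDiffAt ℝ (⊤ : ℕ∞) K rH)
    (hD0 : D rH = 0) (hD1 : deriv D rH = 0) (hD2 : deriv (deriv D) rH = 2 * K rH)
    (hR0 : R rH = 0) (hR1 : deriv R rH = 2 * K rH) (l : ℕ) {u : ℝ → ℝ → ℝ}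
    (hu : SmoothOnStrip I u) (v : ℝ)
    (heq : ∀ r ∈ I, D r * pr (pr u) v r + 2 * pv (pr u) v r + B r * pv u v r
      + R r * pr u v r - (l : ℝ) * ((l : ℝ) + 1) * K r * u v r = 0) (k : ℕ) :
    ((k : ℝ) * (k + 1) - l * (l + 1)) * K rH * (pr^[k] u) v rH
      + ∑ j ∈ Finset.range k, (shiftCoeff 2 (fun i => iteratedDeriv i D rH) k j
          + shiftCoeff 1 (fun i => iteratedDeriv i R rH) k j
          - l * (l + 1) * shiftCoeff 0 (fun i => iteratedDeriv i K rH) k j) * (pr^[j] u) v rH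
      + 2 * pv (pr^[k + 1] u) v rH
      + ∑ j ∈ Finset.range (k + 1),
          (k.choose j : ℝ) * iteratedDeriv (k - j) B rH * pv (pr^[j] u) v rH = 0 := by
  have hle : ((k : ℕ∞) : WithTop ℕ∞) ≤ ((⊤ : ℕ∞) : WithTop ℕ∞) := by
    exact_mod_cast le_top
  have sm : ∀ {F : ℝ → ℝ} {w : ℝ → ℝ → ℝ}, ContDiffAt ℝ (⊤ : ℕ∞) F rH → SmoothOnStrip I w →
      ContDiffAt ℝ k (fun r => F r * w v r) rH := fun hF hw =>
    (hF.mul (hw.contDiffAt_slice hI v hrH)).of_le hle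
  have h1 := sm hD ((hu.pr hI).pr hI)
  have h2 := sm (contDiffAt_const (c := (2 : ℝ))) ((hu.pr hI).pv hI)
  have h3 := sm hB (hu.pv hI)
  have h4 := sm hR (hu.pr hI)
  have hcK : ContDiffAt ℝ (⊤ : ℕ∞) (fun r => (l : ℝ) * ((l : ℝ) + 1) * K r) rH :=
    contDiffAt_const.mul hK
  have h5 := sm hcK hu
  have hzero : iteratedDeriv k (fun r => D r * pr (pr u) v r + 2 * pv (pr u) v r
      + B r * pv u v r + R r * pr u v r - (l : ℝ) * ((l : ℝ) + 1) * K r * u v r) rH = 0 := by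
    have e : (fun r => D r * pr (pr u) v r + 2 * pv (pr u) v r
      + B r * pv u v r + R r * pr u v r - (l : ℝ) * ((l : ℝ) + 1) * K r * u v r)
        =ᶠ[nhds rH] fun _ => 0 := by
      filter_upwards [hI.mem_nhds hrH] with r hr using heq r hr
    rw [e.iteratedDeriv_eq]
    simp
  rw [iteratedDeriv_fun_sub (((h1.add h2).add h3).add h4) h5,
    iteratedDeriv_fun_add ((h1.add h2).add h3) h4, iteratedDeriv_fun_add (h1.add h2) h3,
    iteratedDeriv_fun_add h1 h2] at hzero
  have t1 : iteratedDeriv k (fun r => D r * pr (pr u) v r) rH =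
      k.choose 2 * (2 * K rH) * (pr^[k] u) v rH
      + ∑ j ∈ Finset.range k,
          shiftCoeff 2 (fun i => iteratedDeriv i D rH) k j * (pr^[j] u) v rH := by
    rw [iteratedDeriv_mul_slice hI ((hu.pr hI).pr hI) v hrH hD]
    have := sum_shiftCoeff 2 (fun i => iteratedDeriv i D rH) (fun j => (pr^[j] u) v rH) k
    simp only [Function.iterate_add_apply] at this
    refine this.trans ?_
    rw [show 2 + (k + 1) = k + 1 + 1 + 1 by ring, Finset.sum_range_succ, Finset.sum_range_succ,
      Finset.sum_range_succ, shiftCoeff_diag,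
      shiftCoeff_eq_zero (m := k + 1 + 1) (by simpa using hD0),
      shiftCoeff_eq_zero (m := k + 1)
        (by rw [show k + 2 - (k + 1) = 1 by omega]; simpa using hD1),
      iteratedDeriv_succ, iteratedDeriv_one, hD2]
    ring
  have t2 : iteratedDeriv k (fun r => 2 * pv (pr u) v r) rH = 2 * pv (pr^[k + 1] u) v rH := by
    rw [iteratedDeriv_const_mul_field, Function.iterate_succ_apply,
      ← pr_iterate_pv hI (hu.pr hI) k v hrH, ← iteratedDeriv_slice]
  have t3 : iteratedDeriv k (fun r => B r * pv u v r) rH = ∑ j ∈ Finset.range (k + 1),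
      (k.choose j : ℝ) * iteratedDeriv (k - j) B rH * pv (pr^[j] u) v rH := by
    rw [iteratedDeriv_mul_slice hI (hu.pv hI) v hrH hB]
    exact Finset.sum_congr rfl fun j _ => by rw [pr_iterate_pv hI hu j v hrH]
  have t4 : iteratedDeriv k (fun r => R r * pr u v r) rH =
      k * (2 * K rH) * (pr^[k] u) v rH
      + ∑ j ∈ Finset.range k,
          shiftCoeff 1 (fun i => iteratedDeriv i R rH) k j * (pr^[j] u) v rH := by
    rw [iteratedDeriv_mul_slice hI (hu.pr hI) v hrH hR]
    have := sum_shiftCoeff 1 (fun i => iteratedDeriv i R rH) (fun j => (pr^[j] u) v rH) k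
    simp only [Function.iterate_add_apply] at this
    refine this.trans ?_
    rw [show 1 + (k + 1) = k + 1 + 1 by ring, Finset.sum_range_succ, Finset.sum_range_succ,
      shiftCoeff_diag, shiftCoeff_eq_zero (m := k + 1) (by simpa using hR0),
      iteratedDeriv_one, hR1, Nat.choose_one_right]
    ring
  have t5 : iteratedDeriv k (fun r => (l : ℝ) * ((l : ℝ) + 1) * K r * u v r) rH =
      l * (l + 1) * (K rH * (pr^[k] u) v rH
      + ∑ j ∈ Finset.range k,
          shiftCoeff 0 (fun i => iteratedDeriv i K rH) k j * (pr^[j] u) v rH) := by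
    simp only [mul_assoc ((l : ℝ) * ((l : ℝ) + 1))]
    rw [iteratedDeriv_const_mul_field, iteratedDeriv_mul_slice hI hu v hrH hK]
    have := sum_shiftCoeff 0 (fun i => iteratedDeriv i K rH) (fun j => (pr^[j] u) v rH) k
    simp only [add_zero, zero_add] at this
    rw [this, Finset.sum_range_succ, shiftCoeff_diag, Nat.choose_zero_right, iteratedDeriv_zero,
      Nat.cast_one]
    ring
  have hch : (k.choose 2 : ℝ) * 2 = k * (k - 1) := by
    rw [Nat.cast_choose_two]; ring
  rw [t1, t2, t3, t4, t5] at hzero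
  simp only [sub_mul, add_mul, Finset.sum_sub_distrib, Finset.sum_add_distrib,
    mul_assoc ((l : ℝ) * ((l : ℝ) + 1)), ← Finset.mul_sum]
  rw [← hzero]
  simp only [mul_assoc]
  linear_combination (-(K rH * (pr^[k] u) v rH)) * hch

/-- **A hierarchy of conservation laws along an extremal horizon in spherical symmetry.**
If moreover `D''(r_H) = 2 K(r_H)`, then for every `l ∈ ℕ` there exist constants
`β₀, …, β_l` (depending only on `l`, `D`, `K`) such that for every solution `u` of the
`l`-th reduced wave equation, the quantity
`(∂ᵣ^{l+1}u)(v, r_H) + Σ_{i=0}^{l} βᵢ (∂ᵣ^{i}u)(v, r_H)` is independent of `v`. -/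
theorem hierarchy_of_conservation_laws_extremal_horizon
    (I : Set ℝ) (hIopen : IsOpen I) (hIconn : I.OrdConnected)
    (rH : ℝ) (hrH : rH ∈ I)
    (D K : ℝ → ℝ)
    (hD : ContDiffOn ℝ (⊤ : ℕ∞) D I) (hK : ContDiffOn ℝ (⊤ : ℕ∞) K I)
    (hKpos : ∀ r ∈ I, 0 < K r)
    (hD0 : D rH = 0) (hD1 : deriv D rH = 0)
    (hD2 : deriv (deriv D) rH = 2 * K rH)
    (l : ℕ) :
    ∃ β : ℕ → ℝ, ∀ u : ℝ → ℝ → ℝ, IsReducedWaveSol I D K l u →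
      ∀ v₁ v₂ : ℝ,
        (pr^[l + 1] u) v₁ rH + (∑ i ∈ Finset.range (l + 1), β i * (pr^[i] u) v₁ rH)
          = (pr^[l + 1] u) v₂ rH + (∑ i ∈ Finset.range (l + 1), β i * (pr^[i] u) v₂ rH) := by
  have hI := hIopen.mem_nhds hrH
  have hDat : ContDiffAt ℝ (⊤ : ℕ∞) D rH := hD.contDiffAt hI
  have hKat : ContDiffAt ℝ (⊤ : ℕ∞) K rH := hK.contDiffAt hI
  have hD'at : ContDiffAt ℝ (⊤ : ℕ∞) (deriv D) rH :=
    (hD.deriv_of_isOpen (m := (⊤ : ℕ∞)) hIopen (by simp)).contDiffAt hI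
  have hK'at : ContDiffAt ℝ (⊤ : ℕ∞) (deriv K) rH :=
    (hK.deriv_of_isOpen (m := (⊤ : ℕ∞)) hIopen (by simp)).contDiffAt hI
  let B : ℝ → ℝ := fun r => -(deriv K r) / K r
  let R : ℝ → ℝ := fun r => B r * D r + deriv D r
  have hBat : ContDiffAt ℝ (⊤ : ℕ∞) B rH := hK'at.neg.div hKat (hKpos rH hrH).ne'
  have hRat : ContDiffAt ℝ (⊤ : ℕ∞) R rH := (hBat.mul hDat).add hD'at
  have hR0 : R rH = 0 := by simp [R, hD0, hD1]
  have hR1 : deriv R rH = 2 * K rH := by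
    have h := ((hBat.differentiableAt (by simp)).hasDerivAt.mul
      (hDat.differentiableAt (by simp)).hasDerivAt).add
      (hD'at.differentiableAt (by simp)).hasDerivAt
    have h' : deriv R rH = _ := h.deriv
    rw [h', hD0, hD1, hD2]
    ring
  obtain ⟨γ, hγ⟩ := exists_elimination l
    (fun k => ((k : ℝ) * (k + 1) - l * (l + 1)) * K rH)
    (fun k j => shiftCoeff 2 (fun i => iteratedDeriv i D rH) k j
          + shiftCoeff 1 (fun i => iteratedDeriv i R rH) k j
          - l * (l + 1) * shiftCoeff 0 (fun i => iteratedDeriv i K rH) k j)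
    (fun k j => (k.choose j : ℝ) * iteratedDeriv (k - j) B rH)
    (fun k hk => by
      have hk' : (k : ℝ) < l := by exact_mod_cast hk
      have hk0 : (0 : ℝ) ≤ k := k.cast_nonneg
      refine mul_ne_zero (ne_of_lt ?_) (hKpos rH hrH).ne'
      nlinarith)
    (by simp)
  refine ⟨γ, fun u hu => ?_⟩
  have hus : SmoothOnStrip I u := hu.1
  have hder : ∀ v, HasDerivAt (fun t => (pr^[l + 1] u) t rH
      + ∑ i ∈ Finset.range (l + 1), γ i * (pr^[i] u) t rH) 0 v := by
    intro v
    have h := ((hus.pr_iterate hIopen (l + 1)).hasDerivAt_pv hIopen v hrH).add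
      (HasDerivAt.fun_sum (u := Finset.range (l + 1)) fun i _ =>
        ((hus.pr_iterate hIopen i).hasDerivAt_pv hIopen v hrH).const_mul (γ i))
    rw [hγ (fun j => (pr^[j] u) v rH) (fun j => pv (pr^[j] u) v rH) fun k _ =>
      horizon_relation hIopen hrH hDat hBat hRat hKat hD0 hD1 hD2 hR0 hR1 l hus v (hu.2 v) k] at h
    exact h
  exact is_const_of_deriv_eq_zero (fun v => (hder v).differentiableAt) fun v => (hder v).deriv
end
end

section
/- In the spherically symmetric extremal-horizon reduction setting (with no further condition on D''), every solution u of the 0-th reduced wave equation satisfies that the function v ↦ (∂ᵣu)(v, r_H) − (K'(r_H)/(2·K(r_H)))·u(v, r_H) is constant on ℝ (conservation law for the spherical mean along the extremal horizon {r = r_H}). -/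
/-!
On the horizon both `D` and `D'` vanish, so for `l = 0` the reduced wave equation restricted to
`r = r_H` reads `2 ∂ᵥ∂ᵣu - (K'/K) ∂ᵥu = 0`, i.e. `∂ᵥ (∂ᵣu - K'/(2K) u) = 0` along the horizon.
A differentiable function on `ℝ` with vanishing derivative is constant. Differentiability of
`v ↦ ∂ᵣu(v, r_H)` comes from writing it as the total derivative of `u` at `(v, r_H)` applied to
the vector `(0, 1)`.
-/

noncomputable section

open Real Set Filter

/-- **Conservation law for the spherical mean along an extremal horizon.**
For the spherically symmetric extremal-horizon reduction, every solution `u` of the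
0-th reduced wave equation satisfies that
`v ↦ (∂ᵣu)(v, r_H) − (K'(r_H)/(2 K(r_H))) · u(v, r_H)` is constant on `ℝ`. -/
theorem spherical_mean_conservation_extremal_horizon
    (I : Set ℝ) (hIopen : IsOpen I) (hIconn : I.OrdConnected)
    (rH : ℝ) (hrH : rH ∈ I)
    (D K : ℝ → ℝ)
    (hD : ContDiffOn ℝ (⊤ : ℕ∞) D I) (hK : ContDiffOn ℝ (⊤ : ℕ∞) K I)
    (hKpos : ∀ r ∈ I, 0 < K r)
    (hD0 : D rH = 0) (hD1 : deriv D rH = 0)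
    (u : ℝ → ℝ → ℝ) (hu : IsReducedWaveSol I D K 0 u) :
    ∀ v₁ v₂ : ℝ,
      pr u v₁ rH - (deriv K rH / (2 * K rH)) * u v₁ rH
        = pr u v₂ rH - (deriv K rH / (2 * K rH)) * u v₂ rH := by
  obtain ⟨hsm, heq⟩ := hu
  have hUat : ∀ v : ℝ, ContDiffAt ℝ (⊤ : ℕ∞) (fun p : ℝ × ℝ => u p.1 p.2) (v, rH) := fun v =>
    hsm.contDiffAt ((isOpen_univ.prod hIopen).mem_nhds ⟨mem_univ v, hrH⟩)
  have hdiff : ∀ v : ℝ, DifferentiableAt ℝ (fun p : ℝ × ℝ => u p.1 p.2) (v, rH) := fun v =>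
    (hUat v).differentiableAt (by simp)
  have hline : ∀ v : ℝ, DifferentiableAt ℝ (fun t : ℝ => (t, rH)) v := fun v => by fun_prop
  have hu_diff : Differentiable ℝ (fun t => u t rH) := fun v =>
    DifferentiableAt.comp (f := fun t : ℝ => (t, rH)) v (hdiff v) (hline v)
  have hpr : (fun t => pr u t rH) =
      fun t => fderiv ℝ (fun p : ℝ × ℝ => u p.1 p.2) (t, rH) (0, 1) := by
    funext v
    have hc : HasDerivAt (fun t : ℝ => (v, t)) ((0 : ℝ), (1 : ℝ)) rH :=
      (hasDerivAt_const rH v).prodMk (hasDerivAt_id rH)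
    exact (HasFDerivAt.comp_hasDerivAt rH (hdiff v).hasFDerivAt hc).deriv
  have hpr_diff : Differentiable ℝ (fun t => pr u t rH) := by
    rw [hpr]
    intro v
    have hfd : DifferentiableAt ℝ (fderiv ℝ (fun p : ℝ × ℝ => u p.1 p.2)) (v, rH) :=
      ((hUat v).fderiv_right (m := 1) (by norm_cast)).differentiableAt (by simp)
    exact (DifferentiableAt.comp (f := fun t : ℝ => (t, rH)) v hfd (hline v)).clm_apply
      (differentiableAt_const _)
  have hKne : K rH ≠ 0 := (hKpos rH hrH).ne'
  refine is_const_of_deriv_eq_zero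
    (f := fun v => pr u v rH - (deriv K rH / (2 * K rH)) * u v rH)
    (hpr_diff.sub (hu_diff.const_mul _)) fun v => ?_
  have hder : HasDerivAt (fun v => pr u v rH - (deriv K rH / (2 * K rH)) * u v rH)
      (pv (pr u) v rH - (deriv K rH / (2 * K rH)) * pv u v rH) v :=
    (hpr_diff v).hasDerivAt.sub ((hu_diff v).hasDerivAt.const_mul _)
  rw [hder.deriv]
  have h := heq v rH hrH
  rw [hD0, hD1] at h
  simp only [Nat.cast_zero] at h
  have hcoef : deriv K rH / (2 * K rH) = -(-(deriv K rH) / K rH) / 2 := by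
    field_simp
  rw [hcoef]
  linear_combination h / 2
end
end

section
/- In the spherically symmetric extremal-horizon reduction setting, assume in addition that D''(r_H) = 2·K(r_H). Then for every l ≥ 1 and every integer k with 0 ≤ k ≤ l−1, there exist real constants α₀ᵏ, α₁ᵏ, …, α_{k+1}ᵏ, depending only on l, k and on the functions D and K, such that every solution u of the l-th reduced wave equation satisfies, for all v ∈ ℝ, (∂ᵣ^{k}u)(v, r_H) = Σ_{i=0}^{k+1} αᵢᵏ·(∂ᵥ∂ᵣ^{i}u)(v, r_H) (the transversal derivatives of order below l are expressible on the horizon in terms of v-derivatives). -/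
/-!
Write `w = u(v, ·)` and `z = ∂ᵥu(v, ·)`. For fixed `v` the equation is a linear relation
`D w'' + 2 z' + β z + R w' - l(l+1) K w = 0` between functions of `r`, and since mixed partials
commute, `∂ᵥ∂ᵣⁱu(v, ·) = z⁽ⁱ⁾` (`pv_pr_iterate`). Differentiating it `k` times by the Leibniz rule
(`leibniz_wave`) and evaluating at `r_H`, the degeneracies `D = D' = 0` and `R = 0` kill the terms in
`w⁽ᵏ⁺²⁾` and `w⁽ᵏ⁺¹⁾`. The coefficient of `w⁽ᵏ⁾` is
`C(k,2) D'' + k R' - l(l+1) K = (k(k+1) - l(l+1)) K(r_H)`, because `D''(r_H) = R'(r_H) = 2 K(r_H)`;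
it is nonzero for `k < l`. Everything else involves `z⁽ⁱ⁾` with `i ≤ k+1` and `w⁽ʲ⁾` with `j < k`, so
strong induction on `k` concludes.

Independence of the constants from `u` and `v` is handled by working in the vector space of all
real functions of pairs (solution, `v`): the claim is that the function `(u, v) ↦ ∂ᵣᵏu(v, r_H)` lies
in the span of the functions `(u, v) ↦ ∂ᵥ∂ᵣⁱu(v, r_H)`, `i < k+2`. The lemma `leibniz_sum_mem`
isolates the top-order term of a Leibniz sum modulo such a subspace.
-/

noncomputable section

open Real Set Filter

theorem pr_iterate (u : ℝ → ℝ → ℝ) (n : ℕ) (v : ℝ) : (pr^[n] u) v = iteratedDeriv n (u v) := by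
  induction n with
  | zero => simp
  | succ n ih =>
    rw [Function.iterate_succ_apply', iteratedDeriv_succ, ← ih]
    rfl

section Partials

variable {I : Set ℝ} {u : ℝ → ℝ → ℝ}

theorem hasFDerivAt_uncurried (hI : IsOpen I)
    (hu : ContDiffOn ℝ (⊤ : ℕ∞) (fun p : ℝ × ℝ => u p.1 p.2) (univ ×ˢ I))
    (v : ℝ) {r : ℝ} (hr : r ∈ I) :
    HasFDerivAt (fun p : ℝ × ℝ => u p.1 p.2) (fderiv ℝ (fun p : ℝ × ℝ => u p.1 p.2) (v, r))
      (v, r) :=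
  ((hu.contDiffAt ((isOpen_univ.prod hI).mem_nhds ⟨mem_univ _, hr⟩)).differentiableAt
    (by simp)).hasFDerivAt

theorem pr_eq_fderiv_s5 (hI : IsOpen I)
    (hu : ContDiffOn ℝ (⊤ : ℕ∞) (fun p : ℝ × ℝ => u p.1 p.2) (univ ×ˢ I))
    (v : ℝ) {r : ℝ} (hr : r ∈ I) :
    pr u v r = fderiv ℝ (fun p : ℝ × ℝ => u p.1 p.2) (v, r) (0, 1) :=
  ((hasFDerivAt_uncurried hI hu v hr).comp_hasDerivAt (f := fun t : ℝ => (v, t)) r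
    ((hasDerivAt_const r v).prodMk (hasDerivAt_id' r))).deriv

theorem pv_eq_fderiv_s5 (hI : IsOpen I)
    (hu : ContDiffOn ℝ (⊤ : ℕ∞) (fun p : ℝ × ℝ => u p.1 p.2) (univ ×ˢ I))
    (v : ℝ) {r : ℝ} (hr : r ∈ I) :
    pv u v r = fderiv ℝ (fun p : ℝ × ℝ => u p.1 p.2) (v, r) (1, 0) :=
  ((hasFDerivAt_uncurried hI hu v hr).comp_hasDerivAt (f := fun t : ℝ => (t, r)) v
    ((hasDerivAt_id' v).prodMk (hasDerivAt_const v r))).deriv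

theorem contDiffOn_fderiv_apply (hI : IsOpen I)
    (hu : ContDiffOn ℝ (⊤ : ℕ∞) (fun p : ℝ × ℝ => u p.1 p.2) (univ ×ˢ I)) (e : ℝ × ℝ) :
    ContDiffOn ℝ (⊤ : ℕ∞) (fun p => fderiv ℝ (fun p : ℝ × ℝ => u p.1 p.2) p e) (univ ×ˢ I) :=
  (hu.fderiv_of_isOpen (isOpen_univ.prod hI) (by simp)).clm_apply contDiffOn_const

theorem contDiffOn_pr (hI : IsOpen I)
    (hu : ContDiffOn ℝ (⊤ : ℕ∞) (fun p : ℝ × ℝ => u p.1 p.2) (univ ×ˢ I)) :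
    ContDiffOn ℝ (⊤ : ℕ∞) (fun p : ℝ × ℝ => pr u p.1 p.2) (univ ×ˢ I) :=
  (contDiffOn_fderiv_apply hI hu (0, 1)).congr fun p hp => pr_eq_fderiv_s5 hI hu p.1 hp.2

theorem contDiffOn_pv (hI : IsOpen I)
    (hu : ContDiffOn ℝ (⊤ : ℕ∞) (fun p : ℝ × ℝ => u p.1 p.2) (univ ×ˢ I)) :
    ContDiffOn ℝ (⊤ : ℕ∞) (fun p : ℝ × ℝ => pv u p.1 p.2) (univ ×ˢ I) :=
  (contDiffOn_fderiv_apply hI hu (1, 0)).congr fun p hp => pv_eq_fderiv_s5 hI hu p.1 hp.2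

theorem contDiffOn_slice
    (hu : ContDiffOn ℝ (⊤ : ℕ∞) (fun p : ℝ × ℝ => u p.1 p.2) (univ ×ˢ I)) (v : ℝ) :
    ContDiffOn ℝ (⊤ : ℕ∞) (u v) I :=
  hu.comp (f := fun r : ℝ => (v, r)) (by fun_prop) fun _ hr => ⟨mem_univ _, hr⟩

/-- Symmetry of second derivatives in terms of `pv` and `pr`. -/
theorem pv_pr_comm (hI : IsOpen I)
    (hu : ContDiffOn ℝ (⊤ : ℕ∞) (fun p : ℝ × ℝ => u p.1 p.2) (univ ×ˢ I))
    (v : ℝ) {r : ℝ} (hr : r ∈ I) : pv (pr u) v r = pr (pv u) v r := by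
  set U : ℝ × ℝ → ℝ := fun p => u p.1 p.2 with hU
  have hO : IsOpen ((univ : Set ℝ) ×ˢ I) := isOpen_univ.prod hI
  have hmem : (v, r) ∈ (univ : Set ℝ) ×ˢ I := ⟨mem_univ _, hr⟩
  have hF : HasFDerivAt (fderiv ℝ U) (fderiv ℝ (fderiv ℝ U) (v, r)) (v, r) :=
    (((hu.fderiv_of_isOpen (m := (⊤ : ℕ∞)) hO (by simp)).contDiffAt
      (hO.mem_nhds hmem)).differentiableAt (by simp)).hasFDerivAt
  have h1 : pv (pr u) v r = fderiv ℝ (fderiv ℝ U) (v, r) (1, 0) (0, 1) := by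
    have hfun : (fun t => pr u t r) = fun t => fderiv ℝ U (t, r) (0, 1) :=
      funext fun t => pr_eq_fderiv_s5 hI hu t hr
    have hd : HasDerivAt (fun t => fderiv ℝ U (t, r)) (fderiv ℝ (fderiv ℝ U) (v, r) (1, 0)) v :=
      hF.comp_hasDerivAt (f := fun t : ℝ => (t, r)) v
        ((hasDerivAt_id' v).prodMk (hasDerivAt_const v r))
    unfold pv
    rw [hfun]
    simpa using (hd.clm_apply (hasDerivAt_const v ((0, 1) : ℝ × ℝ))).deriv
  have h2 : pr (pv u) v r = fderiv ℝ (fderiv ℝ U) (v, r) (0, 1) (1, 0) := by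
    have hfun : (fun t => pv u v t) =ᶠ[nhds r] fun t => fderiv ℝ U (v, t) (1, 0) := by
      filter_upwards [hI.mem_nhds hr] with t ht using pv_eq_fderiv_s5 hI hu v ht
    have hd : HasDerivAt (fun t => fderiv ℝ U (v, t)) (fderiv ℝ (fderiv ℝ U) (v, r) (0, 1)) r :=
      hF.comp_hasDerivAt (f := fun t : ℝ => (v, t)) r
        ((hasDerivAt_const r v).prodMk (hasDerivAt_id' r))
    unfold pr
    rw [hfun.deriv_eq]
    simpa using (hd.clm_apply (hasDerivAt_const r ((1, 0) : ℝ × ℝ))).deriv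
  rw [h1, h2]
  refine ((hu.contDiffAt (hO.mem_nhds hmem)).isSymmSndFDerivAt ?_) _ _
  rw [minSmoothness_of_isRCLikeNormedField]
  exact WithTop.coe_le_coe.2 le_top

theorem pv_pr_iterate (hI : IsOpen I) (n : ℕ) (v : ℝ) {r : ℝ} (hr : r ∈ I)
    (hu : ContDiffOn ℝ (⊤ : ℕ∞) (fun p : ℝ × ℝ => u p.1 p.2) (univ ×ˢ I)) :
    pv (pr^[n] u) v r = iteratedDeriv n (pv u v) r := by
  induction n generalizing u with
  | zero => simp
  | succ n ih =>
    rw [Function.iterate_succ_apply, ih (contDiffOn_pr hI hu), iteratedDeriv_succ']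
    refine Filter.EventuallyEq.iteratedDeriv_eq n ?_
    filter_upwards [hI.mem_nhds hr] with t ht using pv_pr_comm hI hu v ht

end Partials

/-- The `k`-th derivative at `x` of the relation `D w'' + 2 z' + β z + R w' - c K w = 0`. -/
theorem leibniz_wave {I : Set ℝ} (hI : IsOpen I) {x : ℝ} (hx : x ∈ I)
    {D β R K w z : ℝ → ℝ} {c : ℝ}
    (hD : ContDiffOn ℝ (⊤ : ℕ∞) D I) (hβ : ContDiffOn ℝ (⊤ : ℕ∞) β I)
    (hR : ContDiffOn ℝ (⊤ : ℕ∞) R I) (hK : ContDiffOn ℝ (⊤ : ℕ∞) K I)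
    (hw : ContDiffOn ℝ (⊤ : ℕ∞) w I) (hz : ContDiffOn ℝ (⊤ : ℕ∞) z I)
    (h : ∀ r ∈ I, D r * deriv (deriv w) r + 2 * deriv z r + β r * z r + R r * deriv w r
      - c * (K r * w r) = 0) (k : ℕ) :
    ∑ j ∈ Finset.range (k + 1),
        k.choose j * iteratedDeriv j D x * iteratedDeriv (k - j + 2) w x
      + 2 * iteratedDeriv (k + 1) z x
      + ∑ j ∈ Finset.range (k + 1),
        k.choose j * iteratedDeriv j β x * iteratedDeriv (k - j) z x
      + ∑ j ∈ Finset.range (k + 1),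
        k.choose j * iteratedDeriv j R x * iteratedDeriv (k - j + 1) w x
      - c * ∑ j ∈ Finset.range (k + 1),
        k.choose j * iteratedDeriv j K x * iteratedDeriv (k - j) w x = 0 := by
  have at_x : ∀ {f : ℝ → ℝ}, ContDiffOn ℝ (⊤ : ℕ∞) f I → ContDiffAt ℝ k f x := fun hf =>
    (hf.contDiffAt (hI.mem_nhds hx)).of_le (WithTop.coe_le_coe.2 le_top)
  have hw1 : ContDiffOn ℝ (⊤ : ℕ∞) (deriv w) I := hw.deriv_of_isOpen hI (by simp)
  have hw2 : ContDiffOn ℝ (⊤ : ℕ∞) (deriv (deriv w)) I := hw1.deriv_of_isOpen hI (by simp)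
  have hz1 : ContDiffOn ℝ (⊤ : ℕ∞) (deriv z) I := hz.deriv_of_isOpen hI (by simp)
  have h0 : iteratedDeriv k (D * deriv (deriv w) + (fun r => 2 * deriv z r) + β * z
      + R * deriv w - fun r => c * (K * w) r) x = 0 := by
    rw [Filter.EventuallyEq.iteratedDeriv_eq k (g := fun _ => (0 : ℝ))]
    · simp
    · filter_upwards [hI.mem_nhds hx] with r hr
      simpa using h r hr
  have s1 : ContDiffAt ℝ k (D * deriv (deriv w)) x := at_x (hD.mul hw2)
  have s2 : ContDiffAt ℝ k (fun r => 2 * deriv z r) x := contDiffAt_const.mul (at_x hz1)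
  have s3 : ContDiffAt ℝ k (β * z) x := at_x (hβ.mul hz)
  have s4 : ContDiffAt ℝ k (R * deriv w) x := at_x (hR.mul hw1)
  have s5 : ContDiffAt ℝ k (K * w) x := at_x (hK.mul hw)
  have s5c : ContDiffAt ℝ k (fun r => c * (K * w) r) x := contDiffAt_const.mul s5
  have s12 : ContDiffAt ℝ k (D * deriv (deriv w) + fun r => 2 * deriv z r) x := s1.add s2
  have s123 : ContDiffAt ℝ k ((D * deriv (deriv w) + fun r => 2 * deriv z r) + β * z) x :=
    s12.add s3
  have s1234 : ContDiffAt ℝ k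
      ((D * deriv (deriv w) + fun r => 2 * deriv z r) + β * z + R * deriv w) x := s123.add s4
  rw [iteratedDeriv_sub s1234 s5c, iteratedDeriv_add s123 s4, iteratedDeriv_add s12 s3,
    iteratedDeriv_add s1 s2, iteratedDeriv_const_mul _ (at_x hz1),
    iteratedDeriv_const_mul _ s5,
    iteratedDeriv_mul (at_x hD) (at_x hw2), iteratedDeriv_mul (at_x hβ) (at_x hz),
    iteratedDeriv_mul (at_x hR) (at_x hw1), iteratedDeriv_mul (at_x hK) (at_x hw)] at h0
  simpa only [← iteratedDeriv_succ'] using h0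

/-- If the coefficients `c j` vanish for `j < s` and the terms `a i` with `i < k` lie in `M`, then
modulo `M` only the summand `j = s` of a Leibniz sum survives. When `k < s` the sum and
`k.choose s` are both zero. -/
theorem leibniz_sum_mem {V : Type*} [AddCommGroup V] [Module ℝ V] (M : Submodule ℝ V)
    (a : ℕ → V) (c : ℕ → ℝ) (k s : ℕ) (hc : ∀ j < s, c j = 0) (ha : ∀ i < k, a i ∈ M) :
    ∑ j ∈ Finset.range (k + 1), ((k.choose j : ℝ) * c j) • a (k - j + s)
      - ((k.choose s : ℝ) * c s) • a k ∈ M := by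
  rcases Nat.lt_or_ge k s with hks | hsk
  · rw [Finset.sum_eq_zero, Nat.choose_eq_zero_of_lt hks]
    · simp
    · intro j hj
      rw [hc j (by grind)]
      simp
  · have hs : s ∈ Finset.range (k + 1) := by grind
    have hsplit := Finset.add_sum_erase _
      (fun j => ((k.choose j : ℝ) * c j) • a (k - j + s)) hs
    simp only [Nat.sub_add_cancel hsk] at hsplit
    rw [← hsplit, add_sub_cancel_left]
    refine M.sum_mem fun j hj => ?_
    rcases Nat.lt_or_ge j s with hjs | hjs
    · simp [hc j hjs]
    · exact M.smul_mem _ (ha _ (by grind))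

/-- **Low-order transversal derivatives on the horizon are expressible in terms of
`v`-derivatives.** Assuming `D''(r_H) = 2 K(r_H)`, for every `l ≥ 1` and `0 ≤ k ≤ l − 1`
there exist constants `α₀ᵏ, …, α_{k+1}ᵏ` (depending only on `l`, `k`, `D`, `K`) such that
every solution `u` of the `l`-th reduced wave equation satisfies, for all `v`,
`(∂ᵣ^{k}u)(v, r_H) = Σ_{i=0}^{k+1} αᵢᵏ (∂ᵥ∂ᵣ^{i}u)(v, r_H)`. -/
theorem transversal_derivatives_in_terms_of_v_derivatives
    (I : Set ℝ) (hIopen : IsOpen I) (hIconn : I.OrdConnected)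
    (rH : ℝ) (hrH : rH ∈ I)
    (D K : ℝ → ℝ)
    (hD : ContDiffOn ℝ (⊤ : ℕ∞) D I) (hK : ContDiffOn ℝ (⊤ : ℕ∞) K I)
    (hKpos : ∀ r ∈ I, 0 < K r)
    (hD0 : D rH = 0) (hD1 : deriv D rH = 0)
    (hD2 : deriv (deriv D) rH = 2 * K rH)
    (l : ℕ) (hl : 1 ≤ l) (k : ℕ) (hk : k ≤ l - 1) :
    ∃ α : ℕ → ℝ, ∀ u : ℝ → ℝ → ℝ, IsReducedWaveSol I D K l u →
      ∀ v : ℝ,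
        (pr^[k] u) v rH = ∑ i ∈ Finset.range (k + 2), α i * pv (pr^[i] u) v rH := by
  set β : ℝ → ℝ := fun r => -(deriv K r) / K r with hβdef
  set R : ℝ → ℝ := fun r => β r * D r + deriv D r with hRdef
  have hD' : ContDiffOn ℝ (⊤ : ℕ∞) (deriv D) I := hD.deriv_of_isOpen hIopen (by simp)
  have hβ : ContDiffOn ℝ (⊤ : ℕ∞) β I :=
    (hK.deriv_of_isOpen hIopen (by simp)).neg.div hK fun r hr => (hKpos r hr).ne'
  have hR : ContDiffOn ℝ (⊤ : ℕ∞) R I := (hβ.mul hD).add hD'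
  have diff_at : ∀ {f : ℝ → ℝ}, ContDiffOn ℝ (⊤ : ℕ∞) f I → DifferentiableAt ℝ f rH := fun hf =>
    (hf.contDiffAt (hIopen.mem_nhds hrH)).differentiableAt (by simp)
  have hR0 : R rH = 0 := by simp [hRdef, hD0, hD1]
  have hR1 : deriv R rH = 2 * K rH := by
    have hd : deriv R rH = _ := (((diff_at hβ).hasDerivAt.mul (diff_at hD).hasDerivAt).add
      (diff_at hD').hasDerivAt).deriv
    rw [hD0, hD1, hD2] at hd
    simpa only [mul_zero, zero_add, add_zero] using hd
  let S := {u : ℝ → ℝ → ℝ // IsReducedWaveSol I D K l u} × ℝ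
  let a : ℕ → S → ℝ := fun i p => (pr^[i] p.1.1) p.2 rH
  let b : ℕ → S → ℝ := fun i p => pv (pr^[i] p.1.1) p.2 rH
  let M : ℕ → Submodule ℝ (S → ℝ) := fun N => Submodule.span ℝ (b '' (Finset.range N : Set ℕ))
  have hb : ∀ {i N : ℕ}, i < N → b i ∈ M N := fun {i N} hi =>
    Submodule.subset_span ⟨i, by simpa using hi, rfl⟩
  have hM : ∀ {m n : ℕ}, m ≤ n → M m ≤ M n := fun {m n} hmn =>
    Submodule.span_mono (image_mono (by simpa using Finset.range_subset_range.2 hmn))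
  have key : ∀ n : ℕ, ∑ j ∈ Finset.range (n + 1),
        ((n.choose j : ℝ) * iteratedDeriv j D rH) • a (n - j + 2)
      + (2 : ℝ) • b (n + 1)
      + ∑ j ∈ Finset.range (n + 1), ((n.choose j : ℝ) * iteratedDeriv j β rH) • b (n - j)
      + ∑ j ∈ Finset.range (n + 1), ((n.choose j : ℝ) * iteratedDeriv j R rH) • a (n - j + 1)
      - ((l : ℝ) * (l + 1)) • ∑ j ∈ Finset.range (n + 1),
        ((n.choose j : ℝ) * iteratedDeriv j K rH) • a (n - j + 0) = 0 := by
    intro n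
    funext p
    obtain ⟨⟨u, hu, hwave⟩, v⟩ := p
    have hL := leibniz_wave (c := (l : ℝ) * (l + 1)) hIopen hrH hD hβ hR hK
      (contDiffOn_slice hu v) (contDiffOn_slice (contDiffOn_pv hIopen hu) v) (fun r hr => by
        have h1 := hwave v r hr
        rw [pv_pr_comm hIopen hu v hr] at h1
        have h2 : D r * deriv (deriv (u v)) r + 2 * deriv (pv u v) r + β r * pv u v r
          + R r * deriv (u v) r - (l : ℝ) * (l + 1) * K r * u v r = 0 := h1
        linarith) n
    simpa only [a, b, pr_iterate, pv_pr_iterate hIopen _ v hrH hu, Pi.add_apply, Pi.sub_apply,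
      Pi.smul_apply, Finset.sum_apply, smul_eq_mul, Pi.zero_apply, add_zero] using hL
  have main : ∀ n : ℕ, n < l → a n ∈ M (n + 2) := by
    intro n
    induction n using Nat.strong_induction_on with
    | _ n ih =>
      intro hn
      have ha : ∀ i < n, a i ∈ M (n + 2) := fun i hi => hM (by omega) (ih i hi (hi.trans hn))
      have tD := leibniz_sum_mem (M (n + 2)) a (fun j => iteratedDeriv j D rH) n 2
        (fun j hj => by interval_cases j <;> simp [hD0, hD1]) ha
      have tR := leibniz_sum_mem (M (n + 2)) a (fun j => iteratedDeriv j R rH) n 1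
        (fun j hj => by interval_cases j; simpa using hR0) ha
      have tK := leibniz_sum_mem (M (n + 2)) a (fun j => iteratedDeriv j K rH) n 0
        (fun j hj => by omega) ha
      have tb : ∑ j ∈ Finset.range (n + 1), ((n.choose j : ℝ) * iteratedDeriv j β rH) • b (n - j)
          ∈ M (n + 2) := Submodule.sum_mem _ fun j _ => Submodule.smul_mem _ _ (hb (by omega))
      have tz : (2 : ℝ) • b (n + 1) ∈ M (n + 2) := Submodule.smul_mem _ _ (hb (by omega))
      have e2 : iteratedDeriv 2 D rH = 2 * K rH := by
        rw [iteratedDeriv_succ, iteratedDeriv_one, hD2]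
      simp only [e2, iteratedDeriv_one, iteratedDeriv_zero, hR1, Nat.cast_choose_two,
        Nat.choose_one_right, Nat.choose_zero_right, Nat.cast_one] at tD tR tK
      have hmem := Submodule.sub_mem _ (Submodule.add_mem _ (Submodule.add_mem _
        (Submodule.add_mem _ tD tz) tb) tR) (Submodule.smul_mem _ ((l : ℝ) * (l + 1)) tK)
      have hkey := key n
      have hnl : (n : ℝ) + 1 ≤ l := by exact_mod_cast hn
      have hne : ((l : ℝ) * (l + 1) - n * (n + 1)) * K rH ≠ 0 := by
        have h0 : (0 : ℝ) ≤ n := n.cast_nonneg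
        have : 0 < (l : ℝ) * (l + 1) - n * (n + 1) := by nlinarith
        exact (mul_pos this (hKpos rH hrH)).ne'
      refine (Submodule.smul_mem_iff _ hne).1 ?_
      -- `hmem` is the differentiated equation minus its `a n` part, so `key` leaves this multiple.
      convert hmem using 1
      rw [← sub_eq_zero, ← neg_eq_zero, ← hkey]
      module
  obtain ⟨α, hα⟩ := Submodule.mem_span_image_finset_iff_exists_fun' ℝ |>.1 (main k (by omega))
  refine ⟨α, fun u hu v => ?_⟩
  have := congrFun hα (⟨u, hu⟩, v)
  simpa [a, b, Finset.sum_apply] using this.symm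
end
end

section
/- For every spherically symmetric solution ψ of the wave equation on extremal Reissner–Nordström of mass M > 0, the function v ↦ (∂ᵣψ)(v, M) + (1/M)·ψ(v, M) is constant on ℝ (the Aretakis conserved quantity H₀ along the extremal horizon {r = M}). -/
/-!
On the horizon `r = M` both `D` and `D'` vanish (the double root of `D` is exactly extremality), so
the wave equation restricts there to `2 ∂ᵥ∂ᵣψ + (2/M) ∂ᵥψ = 0`, i.e. `∂ᵥ(∂ᵣψ + ψ/M) = 0`.
A differentiable function on `ℝ` with zero derivative is constant; differentiability in `v` of
`ψ(·, M)` and `∂ᵣψ(·, M)` comes from the joint smoothness of `ψ` on the open set `ℝ × (0,∞)`.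
-/

noncomputable section

open Real Set Filter

/-- The metric coefficient `D(r) = (1 − M/r)²` of extremal Reissner–Nordström of mass `M`. -/
def RN (M : ℝ) : ℝ → ℝ := fun r => (1 - M / r) ^ 2

/-- A spherically symmetric solution of the wave equation on extremal
Reissner–Nordström of mass `M`: a smooth function `ψ(v,r)` on `ℝ × (0,∞)` with
`D(r)·∂ᵣ²ψ + 2·∂ᵥ∂ᵣψ + (2/r)·∂ᵥψ + (D'(r) + 2D(r)/r)·∂ᵣψ = 0`. -/
def IsRNSphericalWaveSol (M : ℝ) (ψ : ℝ → ℝ → ℝ) : Prop :=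
  ContDiffOn ℝ (⊤ : ℕ∞) (fun p : ℝ × ℝ => ψ p.1 p.2) (univ ×ˢ Ioi 0) ∧
  ∀ v : ℝ, ∀ r ∈ Ioi (0 : ℝ),
    RN M r * pr (pr ψ) v r + 2 * pv (pr ψ) v r + (2 / r) * pv ψ v r
      + (deriv (RN M) r + 2 * RN M r / r) * pr ψ v r = 0

theorem RN_horizon {M : ℝ} (hM : 0 < M) : RN M M = 0 := by
  simp [RN, hM.ne']

theorem deriv_RN_horizon {M : ℝ} (hM : 0 < M) : deriv (RN M) M = 0 := by
  have h : HasDerivAt (fun r : ℝ => 1 - M * r⁻¹) (-(M * (-(M ^ 2)⁻¹))) M :=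
    ((hasDerivAt_inv hM.ne').const_mul M).const_sub 1
  have h2 := h.pow 2
  have h3 : RN M = (fun r : ℝ => 1 - M * r⁻¹) ^ 2 := by
    funext r
    simp [RN, div_eq_mul_inv]
  rw [h3, h2.deriv]
  simp [hM.ne']

theorem differentiable_slice {M : ℝ} (hM : 0 < M) {ψ : ℝ → ℝ → ℝ}
    (h : ContDiffOn ℝ (⊤ : ℕ∞) (fun p : ℝ × ℝ => ψ p.1 p.2) (univ ×ˢ Ioi 0)) :
    Differentiable ℝ (fun v => ψ v M) := by
  intro v
  have ho : IsOpen ((univ : Set ℝ) ×ˢ Ioi (0 : ℝ)) := isOpen_univ.prod isOpen_Ioi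
  have hF : DifferentiableAt ℝ (fun p : ℝ × ℝ => ψ p.1 p.2) (v, M) :=
    (h.contDiffAt (x := (v, M)) (ho.mem_nhds ⟨mem_univ _, hM⟩)).differentiableAt (by simp)
  exact hF.comp (f := fun t : ℝ => (t, M)) v (by fun_prop)

/-- `∂ᵣψ(·, M)` is differentiable because `∂ᵣψ(v, M)` is the total derivative of `ψ` at `(v, M)`
evaluated on `(0, 1)`, and the total derivative is itself smooth. -/
theorem differentiable_pr_slice {M : ℝ} (hM : 0 < M) {ψ : ℝ → ℝ → ℝ}
    (h : ContDiffOn ℝ (⊤ : ℕ∞) (fun p : ℝ × ℝ => ψ p.1 p.2) (univ ×ˢ Ioi 0)) :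
    Differentiable ℝ (fun v => pr ψ v M) := by
  have ho : IsOpen ((univ : Set ℝ) ×ˢ Ioi (0 : ℝ)) := isOpen_univ.prod isOpen_Ioi
  have hc (v : ℝ) : ContDiffAt ℝ (⊤ : ℕ∞) (fun p : ℝ × ℝ => ψ p.1 p.2) (v, M) :=
    h.contDiffAt (ho.mem_nhds ⟨mem_univ _, hM⟩)
  have hpr : (fun v => pr ψ v M) =
      fun v => fderiv ℝ (fun p : ℝ × ℝ => ψ p.1 p.2) (v, M) (0, 1) := by
    funext v
    have hF := ((hc v).differentiableAt (by simp)).hasFDerivAt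
    have hl : HasDerivAt (fun t : ℝ => (v, t)) ((0 : ℝ), (1 : ℝ)) M :=
      (hasDerivAt_const M v).prodMk (hasDerivAt_id M)
    exact (hF.comp_hasDerivAt M hl).deriv
  rw [hpr]
  intro v
  have hd : DifferentiableAt ℝ (fderiv ℝ (fun p : ℝ × ℝ => ψ p.1 p.2)) (v, M) :=
    ((hc v).fderiv_right (m := 1) (WithTop.coe_le_coe.2 le_top)).differentiableAt (by simp)
  have hd2 : DifferentiableAt ℝ
      (fun t : ℝ => fderiv ℝ (fun p : ℝ × ℝ => ψ p.1 p.2) (t, M)) v :=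
    hd.comp (f := fun t : ℝ => (t, M)) v (by fun_prop)
  exact hd2.clm_apply (differentiableAt_const _)

/-- **The Aretakis conserved quantity on extremal Reissner–Nordström.**
For every spherically symmetric solution `ψ` of the wave equation on extremal
Reissner–Nordström of mass `M > 0`, the function
`v ↦ (∂ᵣψ)(v, M) + (1/M)·ψ(v, M)` is constant along the event horizon `{r = M}`. -/
theorem aretakis_conserved_quantity_extremal_RN
    (M : ℝ) (hM : 0 < M) (ψ : ℝ → ℝ → ℝ) (hψ : IsRNSphericalWaveSol M ψ) :
    ∀ v₁ v₂ : ℝ,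
      pr ψ v₁ M + (1 / M) * ψ v₁ M = pr ψ v₂ M + (1 / M) * ψ v₂ M := by
  intro v₁ v₂
  obtain ⟨hs, hw⟩ := hψ
  have h1 := differentiable_pr_slice hM hs
  have h2 := differentiable_slice hM hs
  refine is_const_of_deriv_eq_zero (f := fun v => pr ψ v M + (1 / M) * ψ v M)
    (h1.add (h2.const_mul _)) (fun v => ?_) v₁ v₂
  have hd := ((h1 v).hasDerivAt.add ((h2 v).hasDerivAt.const_mul (1 / M))).deriv
  have e := hw v M hM
  rw [RN_horizon hM, deriv_RN_horizon hM] at e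
  refine hd.trans ?_
  simp only [pv] at e
  linear_combination e / 2
end
end

section
/- For every M > 0 and every l ∈ ℕ there exist real constants β₀, β₁, …, β_l, depending only on l and M, such that for every solution u of the l-th reduced wave equation on extremal Reissner–Nordström of mass M, the function v ↦ (∂ᵣ^{l+1}u)(v, M) + Σ_{i=0}^{l} βᵢ·(∂ᵣ^{i}u)(v, M) is constant on ℝ. (In particular, extremal Reissner–Nordström satisfies the compatibility condition D''(M) = 2·K(M) needed for the hierarchy of conservation laws.) -/
/-!
Multiplying the reduced wave equation by `r²` turns it into
`(r - M)² ∂ᵣ²u + 2(r - M) ∂ᵣu - l(l+1) u + 2 ∂ᵥ(r² ∂ᵣu + r u) = 0`,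
because `r² D = (r - M)²` and `r² D' + 2 r D = 2(r - M)`. Differentiating `k` times in `r` gives
(`differentiated_equation`)
`(r - M)² ∂ᵣᵏ⁺²u + 2(k+1)(r - M) ∂ᵣᵏ⁺¹u + (k(k+1) - l(l+1)) ∂ᵣᵏu`
`  + 2 ∂ᵥ(r² ∂ᵣᵏ⁺¹u + (2k+1) r ∂ᵣᵏu + k² ∂ᵣᵏ⁻¹u) = 0`.
For `k = l` the zeroth-order coefficient vanishes, and at `r = M` so do the first two terms.
Hence `∂ᵣˡ⁺¹u + ((2l+1)/M) ∂ᵣˡu + (l²/M²) ∂ᵣˡ⁻¹u` is constant along the horizon, so the constants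
are explicit and only `β_l` and `β_{l-1}` are nonzero.

The analytic input is that `∂ᵣ` and `∂ᵥ` preserve smoothness on `ℝ × (0, ∞)` and commute there.
-/

noncomputable section

open Real Set Filter

/-- A solution of the `l`-th reduced wave equation on extremal Reissner–Nordström of
mass `M`: a smooth function `u(v,r)` on `ℝ × (0,∞)` with
`D(r)·∂ᵣ²u + 2·∂ᵥ∂ᵣu + (2/r)·∂ᵥu + (D'(r) + 2D(r)/r)·∂ᵣu − l(l+1)·u/r² = 0`. -/
def IsRNReducedWaveSol (M : ℝ) (l : ℕ) (u : ℝ → ℝ → ℝ) : Prop :=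
  ContDiffOn ℝ (⊤ : ℕ∞) (fun p : ℝ × ℝ => u p.1 p.2) (univ ×ˢ Ioi 0) ∧
  ∀ v : ℝ, ∀ r ∈ Ioi (0 : ℝ),
    RN M r * pr (pr u) v r + 2 * pv (pr u) v r + (2 / r) * pv u v r
      + (deriv (RN M) r + 2 * RN M r / r) * pr u v r
      - (l : ℝ) * ((l : ℝ) + 1) * u v r / r ^ 2 = 0

/-- Smoothness on `ℝ × (0, ∞)` of a function of two real variables in curried form. -/
def SmoothHalf (f : ℝ → ℝ → ℝ) : Prop :=
  ContDiffOn ℝ (⊤ : ℕ∞) (fun p : ℝ × ℝ => f p.1 p.2) (univ ×ˢ Ioi 0)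

lemma isOpen_half : IsOpen ((univ : Set ℝ) ×ˢ Ioi (0 : ℝ)) := isOpen_univ.prod isOpen_Ioi

namespace SmoothHalf

variable {f : ℝ → ℝ → ℝ}

lemma contDiffAt (hf : SmoothHalf f) (v : ℝ) {r : ℝ} (hr : 0 < r) :
    ContDiffAt ℝ (⊤ : ℕ∞) (fun p : ℝ × ℝ => f p.1 p.2) (v, r) :=
  ContDiffOn.contDiffAt hf (isOpen_half.mem_nhds ⟨mem_univ _, hr⟩)

lemma hasFDerivAt (hf : SmoothHalf f) (v : ℝ) {r : ℝ} (hr : 0 < r) :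
    HasFDerivAt (fun p : ℝ × ℝ => f p.1 p.2)
      (fderiv ℝ (fun p : ℝ × ℝ => f p.1 p.2) (v, r)) (v, r) :=
  ((hf.contDiffAt v hr).differentiableAt (by simp)).hasFDerivAt

lemma pr_eq (hf : SmoothHalf f) (v : ℝ) {r : ℝ} (hr : 0 < r) :
    HasDerivAt (fun t => f v t) (fderiv ℝ (fun p : ℝ × ℝ => f p.1 p.2) (v, r) (0, 1)) r :=
  HasFDerivAt.comp_hasDerivAt (f := fun t : ℝ => (v, t)) r (hf.hasFDerivAt v hr)
    ((hasDerivAt_const r v).prodMk (hasDerivAt_id r))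

lemma pv_eq (hf : SmoothHalf f) (v : ℝ) {r : ℝ} (hr : 0 < r) :
    HasDerivAt (fun t => f t r) (fderiv ℝ (fun p : ℝ × ℝ => f p.1 p.2) (v, r) (1, 0)) v :=
  HasFDerivAt.comp_hasDerivAt (f := fun t : ℝ => (t, r)) v (hf.hasFDerivAt v hr)
    ((hasDerivAt_id v).prodMk (hasDerivAt_const v r))

lemma hasDerivAt_pr (hf : SmoothHalf f) (v : ℝ) {r : ℝ} (hr : 0 < r) :
    HasDerivAt (fun t => f v t) (pr f v r) r :=
  (hf.pr_eq v hr).differentiableAt.hasDerivAt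

lemma hasDerivAt_pv (hf : SmoothHalf f) (v : ℝ) {r : ℝ} (hr : 0 < r) :
    HasDerivAt (fun t => f t r) (pv f v r) v :=
  (hf.pv_eq v hr).differentiableAt.hasDerivAt

lemma contDiffOn_fderiv (hf : SmoothHalf f) (w : ℝ × ℝ) :
    ContDiffOn ℝ (⊤ : ℕ∞) (fun p => fderiv ℝ (fun p : ℝ × ℝ => f p.1 p.2) p w)
      (univ ×ˢ Ioi 0) :=
  (ContDiffOn.fderiv_of_isOpen hf isOpen_half (by simp)).clm_apply contDiffOn_const

protected lemma pr (hf : SmoothHalf f) : SmoothHalf (pr f) :=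
  (hf.contDiffOn_fderiv (0, 1)).congr fun p hp => (hf.pr_eq p.1 hp.2).deriv

protected lemma pv (hf : SmoothHalf f) : SmoothHalf (pv f) :=
  (hf.contDiffOn_fderiv (1, 0)).congr fun p hp => (hf.pv_eq p.1 hp.2).deriv

lemma iterate_pr (hf : SmoothHalf f) (k : ℕ) : SmoothHalf (_root_.pr^[k] f) := by
  induction k with
  | zero => exact hf
  | succ k ih => rw [Function.iterate_succ_apply']; exact ih.pr

/-- A directional derivative of a first directional derivative is a value of the second
derivative. -/
lemma fderiv_fderiv (hf : SmoothHalf f) (v : ℝ) {r : ℝ} (hr : 0 < r) (w : ℝ × ℝ) :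
    HasFDerivAt (fun p => fderiv ℝ (fun p : ℝ × ℝ => f p.1 p.2) p w)
      ((fderiv ℝ (fderiv ℝ (fun p : ℝ × ℝ => f p.1 p.2)) (v, r)).flip w) (v, r) := by
  have h : DifferentiableAt ℝ (fderiv ℝ (fun p : ℝ × ℝ => f p.1 p.2)) (v, r) :=
    ((hf.contDiffAt v hr).fderiv_right (m := 1) (by norm_cast)).differentiableAt (by simp)
  simpa using h.hasFDerivAt.clm_apply (hasFDerivAt_const w (v, r))

lemma pr_pv_comm (hf : SmoothHalf f) (v : ℝ) {r : ℝ} (hr : 0 < r) :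
    pr (pv f) v r = pv (pr f) v r := by
  have hsymm : IsSymmSndFDerivAt ℝ (fun p : ℝ × ℝ => f p.1 p.2) (v, r) :=
    (hf.contDiffAt v hr).isSymmSndFDerivAt (by simp; norm_cast)
  have nhds_half := isOpen_half.mem_nhds (show (v, r) ∈ (univ : Set ℝ) ×ˢ Ioi (0 : ℝ) from
    ⟨mem_univ _, hr⟩)
  have h1 : (fun p : ℝ × ℝ => pv f p.1 p.2) =ᶠ[nhds (v, r)]
      fun p => fderiv ℝ (fun p : ℝ × ℝ => f p.1 p.2) p (1, 0) := by
    filter_upwards [nhds_half] with p hp using (hf.pv_eq p.1 hp.2).deriv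
  have h2 : (fun p : ℝ × ℝ => pr f p.1 p.2) =ᶠ[nhds (v, r)]
      fun p => fderiv ℝ (fun p : ℝ × ℝ => f p.1 p.2) p (0, 1) := by
    filter_upwards [nhds_half] with p hp using (hf.pr_eq p.1 hp.2).deriv
  have e1 : pr (pv f) v r = _ := (hf.pv.pr_eq v hr).deriv
  have e2 : pv (pr f) v r = _ := (hf.pr.pv_eq v hr).deriv
  rw [e1, e2, h1.fderiv_eq, h2.fderiv_eq, (hf.fderiv_fderiv v hr _).fderiv,
    (hf.fderiv_fderiv v hr _).fderiv]
  exact hsymm.eq _ _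

end SmoothHalf

lemma hasDerivAt_RN (M : ℝ) {r : ℝ} (hr : 0 < r) :
    HasDerivAt (RN M) (2 * (1 - M / r) * (M / r ^ 2)) r := by
  have h := (((hasDerivAt_inv hr.ne').const_mul M).const_sub 1).pow 2
  have e : RN M = (fun t => 1 - M * t⁻¹) ^ 2 := by
    funext t; simp [RN, div_eq_mul_inv]
  rw [e]
  refine h.congr_deriv ?_
  simp; field_simp

/-- The reduced wave equation multiplied by `r²` and differentiated `k` times in `r`. For `k = 0`
the truncated index `k - 1` is harmless, since its coefficient `k²` vanishes. -/
lemma differentiated_equation {M : ℝ} {l : ℕ} {u : ℝ → ℝ → ℝ} (hu : IsRNReducedWaveSol M l u)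
    (k : ℕ) (v r : ℝ) (hr : 0 < r) :
    (r - M) ^ 2 * (pr^[k + 2] u) v r + 2 * (k + 1) * (r - M) * (pr^[k + 1] u) v r
      + (k * (k + 1) - l * (l + 1)) * (pr^[k] u) v r
      + 2 * (r ^ 2 * pv (pr^[k + 1] u) v r + (2 * k + 1) * r * pv (pr^[k] u) v r
        + k ^ 2 * pv (pr^[k - 1] u) v r) = 0 := by
  have hs : SmoothHalf u := hu.1
  induction k generalizing r with
  | zero =>
    have h := hu.2 v r hr
    rw [(hasDerivAt_RN M hr).deriv] at h
    simp only [RN] at h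
    have h' := congrArg (fun x => r ^ 2 * x) h
    simp only [mul_zero] at h'
    simp only [Function.iterate_succ_apply, Function.iterate_zero_apply, Nat.cast_zero]
    refine Eq.trans ?_ h'
    field_simp
    ring
  | succ k ih =>
    have hd : ∀ j, HasDerivAt (fun t => (pr^[j] u) v t) ((pr^[j + 1] u) v r) r := fun j => by
      rw [Function.iterate_succ_apply']
      exact (hs.iterate_pr j).hasDerivAt_pr v hr
    have hdv : ∀ j, HasDerivAt (fun t => pv (pr^[j] u) v t) (pv (pr^[j + 1] u) v r) r :=
      fun j => by
        rw [Function.iterate_succ_apply', ← (hs.iterate_pr j).pr_pv_comm v hr]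
        exact (hs.iterate_pr j).pv.hasDerivAt_pr v hr
    have hlin : HasDerivAt (fun t : ℝ => t - M) 1 r := (hasDerivAt_id r).sub_const M
    have hid : HasDerivAt (fun t : ℝ => t) 1 r := hasDerivAt_id r
    have hE := ((((hlin.fun_pow 2).fun_mul (hd (k + 2))).fun_add
      ((hlin.const_mul (2 * ((k : ℝ) + 1))).fun_mul (hd (k + 1)))).fun_add
      ((hd k).const_mul ((k : ℝ) * (k + 1) - l * (l + 1)))).fun_add
      (((((hid.fun_pow 2).fun_mul (hdv (k + 1))).fun_add
        ((hid.const_mul (2 * (k : ℝ) + 1)).fun_mul (hdv k))).fun_add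
        ((hdv (k - 1)).const_mul ((k : ℝ) ^ 2))).const_mul 2)
    have h0 := hE.unique ((hasDerivAt_const r (0 : ℝ)).congr_of_eventuallyEq (by
      filter_upwards [isOpen_Ioi.mem_nhds hr] with t ht using ih t ht))
    have hk : (k : ℝ) ^ 2 * pv (pr^[k - 1 + 1] u) v r = (k : ℝ) ^ 2 * pv (pr^[k] u) v r := by
      rcases k with _ | k <;> simp
    rw [hk] at h0
    refine Eq.trans ?_ h0
    push_cast
    ring

/-- **The hierarchy of conservation laws on extremal Reissner–Nordström.**
For every `M > 0` and `l ∈ ℕ` there exist constants `β₀, …, β_l` (depending only on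
`l` and `M`) such that for every solution `u` of the `l`-th reduced wave equation on
extremal Reissner–Nordström of mass `M`, the function
`v ↦ (∂ᵣ^{l+1}u)(v, M) + Σ_{i=0}^{l} βᵢ·(∂ᵣ^{i}u)(v, M)` is constant on `ℝ`. -/
theorem hierarchy_of_conservation_laws_extremal_RN
    (M : ℝ) (hM : 0 < M) (l : ℕ) :
    ∃ β : ℕ → ℝ, ∀ u : ℝ → ℝ → ℝ, IsRNReducedWaveSol M l u →
      ∀ v₁ v₂ : ℝ,
        (pr^[l + 1] u) v₁ M + (∑ i ∈ Finset.range (l + 1), β i * (pr^[i] u) v₁ M)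
          = (pr^[l + 1] u) v₂ M + (∑ i ∈ Finset.range (l + 1), β i * (pr^[i] u) v₂ M) := by
  refine ⟨fun i => if i = l then (2 * l + 1) / M else if i + 1 = l then l ^ 2 / M ^ 2 else 0,
    fun u hu v₁ v₂ => ?_⟩
  have hs : SmoothHalf u := hu.1
  have hsum : ∀ v, ∑ i ∈ Finset.range (l + 1),
      (if i = l then (2 * l + 1) / M else if i + 1 = l then (l : ℝ) ^ 2 / M ^ 2 else 0)
        * (pr^[i] u) v M
      = (2 * l + 1) / M * (pr^[l] u) v M + (l : ℝ) ^ 2 / M ^ 2 * (pr^[l - 1] u) v M := by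
    intro v
    rw [Finset.sum_range_succ, if_pos rfl, add_comm]
    congr 1
    rcases l with _ | m
    · simp
    · rw [Finset.sum_range_succ, Finset.sum_eq_zero]
      · simp
      · intro i hi
        have := Finset.mem_range.mp hi
        rw [if_neg (by omega), if_neg (by omega), zero_mul]
  rw [hsum, hsum]
  have hd : ∀ v, HasDerivAt (fun t => (pr^[l + 1] u) t M + ((2 * l + 1) / M * (pr^[l] u) t M
      + (l : ℝ) ^ 2 / M ^ 2 * (pr^[l - 1] u) t M)) 0 v := by
    intro v
    refine (((hs.iterate_pr (l + 1)).hasDerivAt_pv v hM).fun_add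
      ((((hs.iterate_pr l).hasDerivAt_pv v hM).const_mul _).fun_add
      (((hs.iterate_pr (l - 1)).hasDerivAt_pv v hM).const_mul _))).congr_deriv ?_
    have h := differentiated_equation hu l v M hM
    simp only [sub_self] at h
    field_simp
    linarith
  exact is_const_of_deriv_eq_zero (fun v => (hd v).differentiableAt) (fun v => (hd v).deriv) v₁ v₂
end
end

section
/- For every solution ψ of the wave equation on extremal Kerr of mass M > 0, the function v ↦ ∫₀^{2π}∫₀^π (M·sin²θ·∂ᵥψ + 4M·∂ᵣψ + 2ψ)(v, M, θ, φ)·sinθ dθ dφ is constant on ℝ; in particular it equals H₀[ψ] for all v (the conserved quantity along the extremal Kerr horizon). -/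
/-!
On the horizon `r = M` the coefficients of `∂ᵣ²ψ` and `∂ᵣψ` vanish, and the wave equation
multiplied by `sin θ` reads

  `M ∂ᵥ[(M sin²θ ∂ᵥψ + 4M ∂ᵣψ + 2ψ) sin θ]`
    `+ ∂φ[sin θ (2M ∂ᵥψ + 2M ∂ᵣψ) + ∂φψ / sin θ] + ∂θ[sin θ ∂θψ] = 0`

(`horizon_eq`). Integrating over the sphere, the `φ`-derivative contributes zero on every circle
of latitude by periodicity (`integral_azimTerm_latitude`), and the `θ`-derivative contributes zero
on every meridian since `sin θ ∂θψ → 0` at the poles (`integral_polarTerm_meridian`). These two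
steps use opposite orders of integration, so Fubini is needed for the singular-looking term
`∂φ²ψ / sin θ`; it is bounded because the equation itself expresses it through bounded terms
(`integrableOn_azimTerm`). Bounded second derivatives justify differentiating under the integral
sign, so the quantity has zero `v`-derivative (`hasDerivAt_integral_dens`).
-/

noncomputable section

open Real Set Filter

/-- Partial derivative of a function of four real variables `(v, r, θ, φ)` in the
direction indexed by `μ` (`0 = v`, `1 = r`, `2 = θ`, `3 = φ`). -/
def pder (μ : Fin 4) (f : ℝ → ℝ → ℝ → ℝ → ℝ) : ℝ → ℝ → ℝ → ℝ → ℝ :=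
  fun v r θ φ =>
    if μ = 0 then deriv (fun t => f t r θ φ) v
    else if μ = 1 then deriv (fun t => f v t θ φ) r
    else if μ = 2 then deriv (fun t => f v r t φ) θ
    else deriv (fun t => f v r θ t) φ

/-- The extremal Kerr wave operator `ρ²·□_g ψ` of mass `M`, in ingoing
Eddington–Finkelstein coordinates `(v, r, θ, φ)`, with `Δ(r) = (r−M)²`. -/
def kerrWaveOp (M : ℝ) (ψ : ℝ → ℝ → ℝ → ℝ → ℝ) (v r θ φ : ℝ) : ℝ :=
  M ^ 2 * sin θ ^ 2 * pder 0 (pder 0 ψ) v r θ φ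
    + 2 * (r ^ 2 + M ^ 2) * pder 0 (pder 1 ψ) v r θ φ
    + (r - M) ^ 2 * pder 1 (pder 1 ψ) v r θ φ
    + 2 * M * pder 0 (pder 3 ψ) v r θ φ
    + 2 * M * pder 1 (pder 3 ψ) v r θ φ
    + 2 * r * pder 0 ψ v r θ φ
    + 2 * (r - M) * pder 1 ψ v r θ φ
    + deriv (fun t => sin t * pder 2 ψ v r t φ) θ / sin θ
    + pder 3 (pder 3 ψ) v r θ φ / sin θ ^ 2

/-- A solution of the wave equation on extremal Kerr of mass `M`: a smooth function
`ψ(v,r,θ,φ)` on `ℝ × (0,∞) × (0,π) × ℝ`, `2π`-periodic in `φ`, with all partial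
derivatives up to third order bounded, satisfying `ρ²·□_g ψ = 0`. -/
structure IsKerrWaveSol (M : ℝ) (ψ : ℝ → ℝ → ℝ → ℝ → ℝ) : Prop where
  smooth : ContDiffOn ℝ (⊤ : ℕ∞) (fun p : ℝ × ℝ × ℝ × ℝ => ψ p.1 p.2.1 p.2.2.1 p.2.2.2)
    (univ ×ˢ Ioi 0 ×ˢ Ioo 0 π ×ˢ univ)
  periodic : ∀ v r θ φ, ψ v r θ (φ + 2 * π) = ψ v r θ φ
  bounded : ∃ C : ℝ, ∀ L : List (Fin 4), L.length ≤ 3 →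
    ∀ v : ℝ, ∀ r ∈ Ioi (0 : ℝ), ∀ θ ∈ Ioo 0 π, ∀ φ : ℝ,
      |(L.foldr pder ψ) v r θ φ| ≤ C
  wave : ∀ v : ℝ, ∀ r ∈ Ioi (0 : ℝ), ∀ θ ∈ Ioo 0 π, ∀ φ : ℝ,
    kerrWaveOp M ψ v r θ φ = 0

/-- The conserved quantity `H₀[ψ]` along the extremal Kerr horizon `{r = M}`. -/
def H0Kerr (M : ℝ) (ψ : ℝ → ℝ → ℝ → ℝ → ℝ) : ℝ :=
  ∫ φ in (0:ℝ)..(2 * π), ∫ θ in (0:ℝ)..π,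
    (M * sin θ ^ 2 * pder 0 ψ 0 M θ φ + 4 * M * pder 1 ψ 0 M θ φ + 2 * ψ 0 M θ φ) * sin θ

open MeasureTheory
open scoped Topology ContDiff

/-! ### Partial derivatives of smooth functions on the coordinate domain -/

/-- The coordinate domain `ℝ × (0,∞) × (0,π) × ℝ`. -/
def kerrDom : Set (ℝ × ℝ × ℝ × ℝ) := univ ×ˢ Ioi 0 ×ˢ Ioo 0 π ×ˢ univ

/-- The uncurried form of a function of four real variables. -/
def unc (f : ℝ → ℝ → ℝ → ℝ → ℝ) : ℝ × ℝ × ℝ × ℝ → ℝ :=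
  fun p => f p.1 p.2.1 p.2.2.1 p.2.2.2

/-- Smoothness of `f` on the coordinate domain. -/
def SmoothK (f : ℝ → ℝ → ℝ → ℝ → ℝ) : Prop := ContDiffOn ℝ ∞ (unc f) kerrDom

/-- The coordinate vector fields, in the order used by `pder`. -/
def coordVec (μ : Fin 4) : ℝ × ℝ × ℝ × ℝ :=
  if μ = 0 then (1, 0, 0, 0) else if μ = 1 then (0, 1, 0, 0)
  else if μ = 2 then (0, 0, 1, 0) else (0, 0, 0, 1)

lemma isOpen_kerrDom : IsOpen kerrDom :=
  isOpen_univ.prod (isOpen_Ioi.prod (isOpen_Ioo.prod isOpen_univ))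

lemma mem_kerrDom {v r θ φ : ℝ} (hr : 0 < r) (hθ : θ ∈ Ioo 0 π) :
    (v, r, θ, φ) ∈ kerrDom := ⟨mem_univ _, hr, hθ, mem_univ _⟩

namespace SmoothK

variable {f : ℝ → ℝ → ℝ → ℝ → ℝ}

lemma hasFDerivAt (hf : SmoothK f) {p : ℝ × ℝ × ℝ × ℝ} (hp : p ∈ kerrDom) :
    HasFDerivAt (unc f) (fderiv ℝ (unc f) p) p :=
  ((hf.contDiffAt (isOpen_kerrDom.mem_nhds hp)).differentiableAt (by simp)).hasFDerivAt

lemma line0 (hf : SmoothK f) {v r θ φ : ℝ} (hr : 0 < r) (hθ : θ ∈ Ioo 0 π) :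
    HasDerivAt (fun t => f t r θ φ) (fderiv ℝ (unc f) (v, r, θ, φ) (coordVec 0)) v := by
  have c : HasDerivAt (fun t : ℝ => (t, r, θ, φ)) (coordVec 0) v :=
    (hasDerivAt_id v).prodMk (hasDerivAt_const v ((r, θ, φ) : ℝ × ℝ × ℝ))
  exact (hf.hasFDerivAt (mem_kerrDom hr hθ)).comp_hasDerivAt v c

lemma line1 (hf : SmoothK f) {v r θ φ : ℝ} (hr : 0 < r) (hθ : θ ∈ Ioo 0 π) :
    HasDerivAt (fun t => f v t θ φ) (fderiv ℝ (unc f) (v, r, θ, φ) (coordVec 1)) r := by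
  have c : HasDerivAt (fun t : ℝ => (v, t, θ, φ)) (coordVec 1) r :=
    (hasDerivAt_const r v).prodMk
      ((hasDerivAt_id r).prodMk (hasDerivAt_const r ((θ, φ) : ℝ × ℝ)))
  exact (hf.hasFDerivAt (mem_kerrDom hr hθ)).comp_hasDerivAt r c

lemma line2 (hf : SmoothK f) {v r θ φ : ℝ} (hr : 0 < r) (hθ : θ ∈ Ioo 0 π) :
    HasDerivAt (fun t => f v r t φ) (fderiv ℝ (unc f) (v, r, θ, φ) (coordVec 2)) θ := by
  have c : HasDerivAt (fun t : ℝ => (v, r, t, φ)) (coordVec 2) θ :=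
    (hasDerivAt_const θ v).prodMk
      ((hasDerivAt_const θ r).prodMk ((hasDerivAt_id θ).prodMk (hasDerivAt_const θ φ)))
  exact (hf.hasFDerivAt (mem_kerrDom hr hθ)).comp_hasDerivAt θ c

lemma line3 (hf : SmoothK f) {v r θ φ : ℝ} (hr : 0 < r) (hθ : θ ∈ Ioo 0 π) :
    HasDerivAt (fun t => f v r θ t) (fderiv ℝ (unc f) (v, r, θ, φ) (coordVec 3)) φ := by
  have c : HasDerivAt (fun t : ℝ => (v, r, θ, t)) (coordVec 3) φ :=
    (hasDerivAt_const φ v).prodMk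
      ((hasDerivAt_const φ r).prodMk ((hasDerivAt_const φ θ).prodMk (hasDerivAt_id φ)))
  exact (hf.hasFDerivAt (mem_kerrDom hr hθ)).comp_hasDerivAt φ c

lemma pder_eq (hf : SmoothK f) (μ : Fin 4) {p : ℝ × ℝ × ℝ × ℝ} (hp : p ∈ kerrDom) :
    unc (pder μ f) p = fderiv ℝ (unc f) p (coordVec μ) := by
  obtain ⟨v, r, θ, φ⟩ := p
  obtain ⟨-, hr, hθ, -⟩ := hp
  fin_cases μ
  · exact (hf.line0 hr hθ).deriv
  · exact (hf.line1 hr hθ).deriv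
  · exact (hf.line2 hr hθ).deriv
  · exact (hf.line3 hr hθ).deriv

lemma pder (hf : SmoothK f) (μ : Fin 4) : SmoothK (pder μ f) :=
  ((hf.fderiv_of_isOpen (m := ∞) isOpen_kerrDom (by simp)).clm_apply
    contDiffOn_const).congr fun _ hp => hf.pder_eq μ hp

lemma hasDerivAt0 (hf : SmoothK f) {v r θ φ : ℝ} (hr : 0 < r) (hθ : θ ∈ Ioo 0 π) :
    HasDerivAt (fun t => f t r θ φ) (_root_.pder 0 f v r θ φ) v := by
  rw [show _root_.pder 0 f v r θ φ = _ from hf.pder_eq 0 (mem_kerrDom hr hθ)]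
  exact hf.line0 hr hθ

lemma hasDerivAt2 (hf : SmoothK f) {v r θ φ : ℝ} (hr : 0 < r) (hθ : θ ∈ Ioo 0 π) :
    HasDerivAt (fun t => f v r t φ) (_root_.pder 2 f v r θ φ) θ := by
  rw [show _root_.pder 2 f v r θ φ = _ from hf.pder_eq 2 (mem_kerrDom hr hθ)]
  exact hf.line2 hr hθ

lemma hasDerivAt3 (hf : SmoothK f) {v r θ φ : ℝ} (hr : 0 < r) (hθ : θ ∈ Ioo 0 π) :
    HasDerivAt (fun t => f v r θ t) (_root_.pder 3 f v r θ φ) φ := by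
  rw [show _root_.pder 3 f v r θ φ = _ from hf.pder_eq 3 (mem_kerrDom hr hθ)]
  exact hf.line3 hr hθ

lemma pder_comm (hf : SmoothK f) (μ ν : Fin 4) {v r θ φ : ℝ} (hr : 0 < r)
    (hθ : θ ∈ Ioo 0 π) :
    _root_.pder μ (_root_.pder ν f) v r θ φ = _root_.pder ν (_root_.pder μ f) v r θ φ := by
  have hp : ((v, r, θ, φ) : ℝ × ℝ × ℝ × ℝ) ∈ kerrDom := mem_kerrDom hr hθ
  have hD := (hf.fderiv_of_isOpen (m := ∞) isOpen_kerrDom (by simp)).contDiffAt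
    (isOpen_kerrDom.mem_nhds hp)
  have key : ∀ μ ν : Fin 4, _root_.pder μ (_root_.pder ν f) v r θ φ =
      fderiv ℝ (fderiv ℝ (unc f)) (v, r, θ, φ) (coordVec μ) (coordVec ν) := by
    intro μ ν
    have e1 : _root_.pder μ (_root_.pder ν f) v r θ φ = _ := (hf.pder ν).pder_eq μ hp
    have e2 : unc (_root_.pder ν f) =ᶠ[𝓝 (v, r, θ, φ)]
        fun p => fderiv ℝ (unc f) p (coordVec ν) :=
      eventually_of_mem (isOpen_kerrDom.mem_nhds hp) fun p hp => hf.pder_eq ν hp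
    rw [e1, e2.fderiv_eq, fderiv_clm_apply (hD.differentiableAt (by simp)) (by fun_prop)]
    simp
  rw [key, key]
  refine ((hf.contDiffAt (isOpen_kerrDom.mem_nhds hp)).isSymmSndFDerivAt ?_).eq _ _
  simp only [minSmoothness_of_isRCLikeNormedField]
  exact WithTop.coe_le_coe.2 (le_top : (2 : ℕ∞) ≤ ⊤)

/-- Continuity in the angles `(φ, θ)` on a sphere of constant `v` and `r`. -/
lemma continuousOn_sphere (hf : SmoothK f) {v r : ℝ} (hr : 0 < r) :
    ContinuousOn (fun q : ℝ × ℝ => f v r q.2 q.1) (univ ×ˢ Ioo 0 π) :=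
  (ContDiffOn.continuousOn hf).comp (f := fun q : ℝ × ℝ => (v, r, q.2, q.1)) (by fun_prop)
    fun _ hq => mem_kerrDom hr hq.2

end SmoothK

/-! ### Integration over the sphere -/

/-- The coordinate sphere, with the coordinates in the order `(φ, θ)`. -/
def sph : Set (ℝ × ℝ) := Ioo 0 (2 * π) ×ˢ Ioo 0 π

lemma measurableSet_sph : MeasurableSet sph := measurableSet_Ioo.prod measurableSet_Ioo

lemma sph_finite : volume sph < ⊤ := by
  rw [sph, Measure.volume_eq_prod, Measure.prod_prod]
  exact ENNReal.mul_lt_top measure_Ioo_lt_top measure_Ioo_lt_top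

lemma integrableOn_sph {g : ℝ × ℝ → ℝ} (hc : ContinuousOn g (univ ×ˢ Ioo 0 π)) (C : ℝ)
    (hC : ∀ q ∈ sph, |g q| ≤ C) : IntegrableOn g sph :=
  .of_bound sph_finite
    ((hc.mono (prod_mono (subset_univ _) subset_rfl)).aestronglyMeasurable measurableSet_sph) C
    (ae_restrict_of_forall_mem measurableSet_sph hC)

lemma integral_sph {g : ℝ × ℝ → ℝ} (hg : IntegrableOn g sph) :
    ∫ q in sph, g q = ∫ φ in (0:ℝ)..(2 * π), ∫ θ in (0:ℝ)..π, g (φ, θ) := by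
  have hpi := pi_pos
  simp only [intervalIntegral.integral_of_le hpi.le,
    intervalIntegral.integral_of_le (by positivity : (0:ℝ) ≤ 2 * π), integral_Ioc_eq_integral_Ioo]
  exact setIntegral_prod g hg

lemma integral_sph_symm {g : ℝ × ℝ → ℝ} (hg : IntegrableOn g sph) :
    ∫ q in sph, g q = ∫ θ in Ioo 0 π, ∫ φ in (0:ℝ)..(2 * π), g (φ, θ) := by
  have hpi := pi_pos
  simp only [intervalIntegral.integral_of_le (by positivity : (0:ℝ) ≤ 2 * π),
    integral_Ioc_eq_integral_Ioo]
  rw [sph, Measure.volume_eq_prod, ← setIntegral_prod_swap (μ := volume) (ν := volume)]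
  exact setIntegral_prod _ (IntegrableOn.swap hg)

/-! ### The conservation law -/

namespace IsKerrWaveSol

variable {M : ℝ} {ψ : ℝ → ℝ → ℝ → ℝ → ℝ}

lemma smoothK (hψ : IsKerrWaveSol M ψ) : SmoothK ψ := hψ.smooth

lemma bounds (hψ : IsKerrWaveSol M ψ) : ∃ C : ℝ, 0 ≤ C ∧ ∀ v r θ φ : ℝ, 0 < r → θ ∈ Ioo 0 π →
    |ψ v r θ φ| ≤ C ∧ (∀ μ, |pder μ ψ v r θ φ| ≤ C) ∧
    ∀ μ ν, |pder μ (pder ν ψ) v r θ φ| ≤ C := by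
  obtain ⟨C, hC⟩ := hψ.bounded
  have h0 : ∀ v r θ φ : ℝ, 0 < r → θ ∈ Ioo 0 π → |ψ v r θ φ| ≤ C := fun v r θ φ hr hθ =>
    hC [] (by simp) v r hr θ hθ φ
  refine ⟨C, ?_, fun v r θ φ hr hθ => ⟨h0 v r θ φ hr hθ, fun μ => ?_, fun μ ν => ?_⟩⟩
  · exact (abs_nonneg _).trans
      (h0 0 1 (π / 2) 0 one_pos ⟨by linarith [pi_pos], by linarith [pi_pos]⟩)
  · exact hC [μ] (by simp) v r hr θ hθ φ
  · exact hC [μ, ν] (by simp) v r hr θ hθ φ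

lemma pder_periodic (hψ : IsKerrWaveSol M ψ) (μ : Fin 4) (v r θ φ : ℝ) :
    pder μ ψ v r θ (φ + 2 * π) = pder μ ψ v r θ φ := by
  fin_cases μ
  · simp [pder, hψ.periodic]
  · simp [pder, hψ.periodic]
  · simp [pder, hψ.periodic]
  · simp only [pder]
    simp [← deriv_comp_add_const, hψ.periodic]

end IsKerrWaveSol

/-- The density of the conserved quantity on the sphere at advanced time `v`. -/
def dens (M : ℝ) (ψ : ℝ → ℝ → ℝ → ℝ → ℝ) (v : ℝ) (q : ℝ × ℝ) : ℝ :=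
  (M * sin q.2 ^ 2 * pder 0 ψ v M q.2 q.1 + 4 * M * pder 1 ψ v M q.2 q.1
    + 2 * ψ v M q.2 q.1) * sin q.2

/-- The `v`-derivative of `dens`. -/
def densDeriv (M : ℝ) (ψ : ℝ → ℝ → ℝ → ℝ → ℝ) (v : ℝ) (q : ℝ × ℝ) : ℝ :=
  (M * sin q.2 ^ 2 * pder 0 (pder 0 ψ) v M q.2 q.1 + 4 * M * pder 0 (pder 1 ψ) v M q.2 q.1
    + 2 * pder 0 ψ v M q.2 q.1) * sin q.2

/-- The terms of `sin θ · ρ²□ψ` on the horizon that are `φ`-derivatives. -/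
def azimTerm (M : ℝ) (ψ : ℝ → ℝ → ℝ → ℝ → ℝ) (v : ℝ) (q : ℝ × ℝ) : ℝ :=
  sin q.2 * (2 * M * pder 3 (pder 0 ψ) v M q.2 q.1 + 2 * M * pder 3 (pder 1 ψ) v M q.2 q.1)
    + pder 3 (pder 3 ψ) v M q.2 q.1 / sin q.2

/-- The term `∂θ(sin θ ∂θψ)` of `sin θ · ρ²□ψ` on the horizon. -/
def polarTerm (M : ℝ) (ψ : ℝ → ℝ → ℝ → ℝ → ℝ) (v : ℝ) (q : ℝ × ℝ) : ℝ :=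
  cos q.2 * pder 2 ψ v M q.2 q.1 + sin q.2 * pder 2 (pder 2 ψ) v M q.2 q.1

section

variable {M : ℝ} {ψ : ℝ → ℝ → ℝ → ℝ → ℝ}

lemma sin_ne_zero_of_mem {θ : ℝ} (hθ : θ ∈ Ioo 0 π) : sin θ ≠ 0 := (sin_pos_of_mem_Ioo hθ).ne'

lemma hasDerivAt_sin_mul (hM : 0 < M) (hψ : IsKerrWaveSol M ψ) (v φ : ℝ) {θ : ℝ}
    (hθ : θ ∈ Ioo 0 π) :
    HasDerivAt (fun t => sin t * pder 2 ψ v M t φ) (polarTerm M ψ v (φ, θ)) θ :=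
  (hasDerivAt_sin θ).mul ((hψ.smoothK.pder 2).hasDerivAt2 hM hθ)

/-- The wave equation at `r = M`, multiplied by `sin θ`. -/
lemma horizon_eq (hM : 0 < M) (hψ : IsKerrWaveSol M ψ) (v : ℝ) {q : ℝ × ℝ}
    (hθ : q.2 ∈ Ioo 0 π) :
    M * densDeriv M ψ v q + azimTerm M ψ v q + polarTerm M ψ v q = 0 := by
  have h := hψ.wave v M hM q.2 hθ q.1
  have hs := sin_ne_zero_of_mem hθ
  rw [kerrWaveOp, (hasDerivAt_sin_mul hM hψ v q.1 hθ).deriv, hψ.smoothK.pder_comm 0 3 hM hθ,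
    hψ.smoothK.pder_comm 1 3 hM hθ] at h
  simp only [densDeriv, azimTerm]
  rw [← zero_mul (sin q.2), ← h]
  field_simp
  ring

lemma abs_densTerm_le {M s a b c C : ℝ} (hM : 0 < M) (hs : |s| ≤ 1) (ha : |a| ≤ C)
    (hb : |b| ≤ C) (hc : |c| ≤ C) :
    |(M * s ^ 2 * a + 4 * M * b + 2 * c) * s| ≤ (5 * M + 2) * C := by
  have h1 : |M * s ^ 2 * a| ≤ M * C := by
    rw [abs_mul, abs_mul, abs_of_pos hM, abs_pow]
    have : M * |s| ^ 2 ≤ M := mul_le_of_le_one_right hM.le (pow_le_one₀ (abs_nonneg _) hs)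
    exact mul_le_mul this ha (abs_nonneg _) hM.le
  have h2 : |4 * M * b| ≤ 4 * M * C := by
    rw [abs_mul, abs_of_pos (by positivity : 0 < 4 * M)]; gcongr
  have h3 : |2 * c| ≤ 2 * C := by
    rw [abs_mul, abs_two]; gcongr
  rw [abs_mul]
  refine (mul_le_of_le_one_right (abs_nonneg _) hs).trans ?_
  refine (abs_add_three _ _ _).trans ?_
  linarith

lemma continuousOn_dens (hM : 0 < M) (hψ : IsKerrWaveSol M ψ) (v : ℝ) :
    ContinuousOn (dens M ψ v) (univ ×ˢ Ioo 0 π) := by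
  have h0 := (hψ.smoothK.pder 0).continuousOn_sphere (v := v) hM
  have h1 := (hψ.smoothK.pder 1).continuousOn_sphere (v := v) hM
  have h := hψ.smoothK.continuousOn_sphere (v := v) hM
  have hs : ContinuousOn (fun q : ℝ × ℝ => sin q.2) (univ ×ˢ Ioo 0 π) := by fun_prop
  exact ((((hs.pow 2).const_mul M).mul h0).add (h1.const_mul (4 * M))
    |>.add (h.const_mul 2)).mul hs

lemma continuousOn_densDeriv (hM : 0 < M) (hψ : IsKerrWaveSol M ψ) (v : ℝ) :
    ContinuousOn (densDeriv M ψ v) (univ ×ˢ Ioo 0 π) := by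
  have h0 := ((hψ.smoothK.pder 0).pder 0).continuousOn_sphere (v := v) hM
  have h1 := ((hψ.smoothK.pder 1).pder 0).continuousOn_sphere (v := v) hM
  have h := (hψ.smoothK.pder 0).continuousOn_sphere (v := v) hM
  unfold densDeriv
  fun_prop

lemma continuousOn_polarTerm (hM : 0 < M) (hψ : IsKerrWaveSol M ψ) (v : ℝ) :
    ContinuousOn (polarTerm M ψ v) (univ ×ˢ Ioo 0 π) := by
  have h0 := ((hψ.smoothK.pder 2).pder 2).continuousOn_sphere (v := v) hM
  have h := (hψ.smoothK.pder 2).continuousOn_sphere (v := v) hM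
  unfold polarTerm
  fun_prop

lemma exists_densDeriv_bound (hM : 0 < M) (hψ : IsKerrWaveSol M ψ) :
    ∃ B, ∀ v, ∀ q ∈ sph, |densDeriv M ψ v q| ≤ B := by
  obtain ⟨C, -, hC⟩ := hψ.bounds
  refine ⟨(5 * M + 2) * C, fun v q hq => ?_⟩
  obtain ⟨-, h1, h2⟩ := hC v M q.2 q.1 hM hq.2
  exact abs_densTerm_le hM (abs_sin_le_one _) (h2 0 0) (h2 0 1) (h1 0)

lemma integrableOn_dens (hM : 0 < M) (hψ : IsKerrWaveSol M ψ) (v : ℝ) :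
    IntegrableOn (dens M ψ v) sph := by
  obtain ⟨C, -, hC⟩ := hψ.bounds
  refine integrableOn_sph (continuousOn_dens hM hψ v) ((5 * M + 2) * C) fun q hq => ?_
  obtain ⟨h0, h1, -⟩ := hC v M q.2 q.1 hM hq.2
  exact abs_densTerm_le hM (abs_sin_le_one _) (h1 0) (h1 1) h0

lemma integrableOn_densDeriv (hM : 0 < M) (hψ : IsKerrWaveSol M ψ) (v : ℝ) :
    IntegrableOn (densDeriv M ψ v) sph := by
  obtain ⟨B, hB⟩ := exists_densDeriv_bound hM hψ
  exact integrableOn_sph (continuousOn_densDeriv hM hψ v) B (hB v)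

lemma exists_polarTerm_bound (hM : 0 < M) (hψ : IsKerrWaveSol M ψ) :
    ∃ B, ∀ v φ θ, θ ∈ Ioo 0 π → |polarTerm M ψ v (φ, θ)| ≤ B := by
  obtain ⟨C, hC0, hC⟩ := hψ.bounds
  refine ⟨1 * C + 1 * C, fun v φ θ hθ => ?_⟩
  obtain ⟨-, h1, h2⟩ := hC v M θ φ hM hθ
  refine (abs_add_le _ _).trans ?_
  rw [abs_mul, abs_mul]
  gcongr
  exacts [abs_cos_le_one _, h1 2, abs_sin_le_one _, h2 2 2]

lemma integrableOn_polarTerm (hM : 0 < M) (hψ : IsKerrWaveSol M ψ) (v : ℝ) :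
    IntegrableOn (polarTerm M ψ v) sph := by
  obtain ⟨B, hB⟩ := exists_polarTerm_bound hM hψ
  exact integrableOn_sph (continuousOn_polarTerm hM hψ v) B fun q hq => hB v q.1 q.2 hq.2

/-- The `1 / sin θ` in `azimTerm` is harmless: the wave equation expresses `azimTerm` through
bounded quantities. -/
lemma integrableOn_azimTerm (hM : 0 < M) (hψ : IsKerrWaveSol M ψ) (v : ℝ) :
    IntegrableOn (azimTerm M ψ v) sph := by
  refine IntegrableOn.congr_fun (f := fun q => -(M * densDeriv M ψ v q) - polarTerm M ψ v q)
    (((integrableOn_densDeriv hM hψ v).const_mul M).neg.sub (integrableOn_polarTerm hM hψ v))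
    (fun q hq => ?_) measurableSet_sph
  have := horizon_eq hM hψ v hq.2
  dsimp only
  linarith

/-- The flux `sin θ ∂θψ` vanishes at both poles because `∂θψ` is bounded. -/
lemma integral_polarTerm_meridian (hM : 0 < M) (hψ : IsKerrWaveSol M ψ) (v φ : ℝ) :
    ∫ θ in (0:ℝ)..π, polarTerm M ψ v (φ, θ) = 0 := by
  obtain ⟨C, hC0, hC⟩ := hψ.bounds
  obtain ⟨B, hB⟩ := exists_polarTerm_bound hM hψ
  have hlim : ∀ (a : ℝ) (s : Set ℝ), sin a = 0 → (∀ᶠ t in 𝓝[s] a, t ∈ Ioo 0 π) →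
      Tendsto (fun t => sin t * pder 2 ψ v M t φ) (𝓝[s] a) (𝓝 0) := by
    intro a s ha hs
    have hsin : Tendsto sin (𝓝[s] a) (𝓝 0) :=
      ha ▸ (continuous_sin.tendsto a).mono_left nhdsWithin_le_nhds
    refine hsin.zero_mul_isBoundedUnder_le ⟨C, ?_⟩
    rw [eventually_map]
    filter_upwards [hs] with t ht
    exact (hC v M t φ hM ht).2.1 2
  have hint : IntervalIntegrable (fun θ => polarTerm M ψ v (φ, θ)) volume 0 π := by
    rw [intervalIntegrable_iff_integrableOn_Ioo_of_le pi_pos.le]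
    have hc : ContinuousOn (fun θ => polarTerm M ψ v (φ, θ)) (Ioo 0 π) :=
      (continuousOn_polarTerm hM hψ v).comp (f := fun θ : ℝ => (φ, θ)) (by fun_prop)
        fun θ hθ => ⟨mem_univ _, hθ⟩
    exact .of_bound measure_Ioo_lt_top (hc.aestronglyMeasurable measurableSet_Ioo) B
      (ae_restrict_of_forall_mem measurableSet_Ioo fun θ hθ => hB v φ θ hθ)
  have := intervalIntegral.integral_eq_sub_of_hasDerivAt_of_tendsto pi_pos
    (fun θ hθ => hasDerivAt_sin_mul hM hψ v φ hθ) hint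
    (hlim 0 (Ioi 0) sin_zero (Ioo_mem_nhdsGT pi_pos))
    (hlim π (Iio π) sin_pi (Ioo_mem_nhdsLT pi_pos))
  simpa using this

/-- A `φ`-derivative of a periodic function has mean zero on each circle of latitude. -/
lemma integral_azimTerm_latitude (hM : 0 < M) (hψ : IsKerrWaveSol M ψ) (v : ℝ) {θ : ℝ}
    (hθ : θ ∈ Ioo 0 π) :
    ∫ φ in (0:ℝ)..(2 * π), azimTerm M ψ v (φ, θ) = 0 := by
  have hd : ∀ φ, HasDerivAt (fun φ => sin θ * (2 * M * pder 0 ψ v M θ φ +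
      2 * M * pder 1 ψ v M θ φ) + pder 3 ψ v M θ φ / sin θ) (azimTerm M ψ v (φ, θ)) φ :=
    fun φ => (((((hψ.smoothK.pder 0).hasDerivAt3 hM hθ).const_mul (2 * M)).add
      (((hψ.smoothK.pder 1).hasDerivAt3 hM hθ).const_mul (2 * M))).const_mul (sin θ)).add
        (((hψ.smoothK.pder 3).hasDerivAt3 hM hθ).div_const (sin θ))
  have hcont : ∀ μ ν, Continuous fun φ => pder μ (pder ν ψ) v M θ φ := fun μ ν => by
    rw [← continuousOn_univ]
    exact (((hψ.smoothK.pder ν).pder μ).continuousOn_sphere (v := v) hM).comp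
      (f := fun φ : ℝ => (φ, θ)) (by fun_prop) fun φ _ => ⟨mem_univ _, hθ⟩
  have hc : Continuous fun φ => azimTerm M ψ v (φ, θ) := by
    have h0 := hcont 3 0
    have h1 := hcont 3 1
    have h3 := hcont 3 3
    simp only [azimTerm]
    fun_prop
  rw [intervalIntegral.integral_eq_sub_of_hasDerivAt (fun φ _ => hd φ)
    (hc.intervalIntegrable _ _)]
  have hp := fun μ => hψ.pder_periodic μ v M θ 0
  simp only [zero_add] at hp
  simp [hp]

lemma integral_densDeriv (hM : 0 < M) (hψ : IsKerrWaveSol M ψ) (v : ℝ) :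
    ∫ q in sph, densDeriv M ψ v q = 0 := by
  have hA : ∫ q in sph, azimTerm M ψ v q = 0 := by
    rw [integral_sph_symm (integrableOn_azimTerm hM hψ v)]
    exact setIntegral_eq_zero_of_forall_eq_zero fun θ hθ => integral_azimTerm_latitude hM hψ v hθ
  have hB : ∫ q in sph, polarTerm M ψ v q = 0 := by
    simp [integral_sph (integrableOn_polarTerm hM hψ v), integral_polarTerm_meridian hM hψ v]
  have hK : ∫ q in sph, M * densDeriv M ψ v q =
      ∫ q in sph, -(azimTerm M ψ v q + polarTerm M ψ v q) := by
    refine setIntegral_congr_fun measurableSet_sph fun q hq => ?_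
    have := horizon_eq hM hψ v hq.2
    linarith
  rw [integral_const_mul, integral_neg,
    integral_add (integrableOn_azimTerm hM hψ v) (integrableOn_polarTerm hM hψ v), hA, hB] at hK
  simpa [hM.ne'] using hK

lemma hasDerivAt_dens (hM : 0 < M) (hψ : IsKerrWaveSol M ψ) (v : ℝ) {q : ℝ × ℝ}
    (hq : q ∈ sph) : HasDerivAt (fun v => dens M ψ v q) (densDeriv M ψ v q) v :=
  (((((hψ.smoothK.pder 0).hasDerivAt0 hM hq.2).const_mul (M * sin q.2 ^ 2)).add
    (((hψ.smoothK.pder 1).hasDerivAt0 hM hq.2).const_mul (4 * M))).add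
      ((hψ.smoothK.hasDerivAt0 hM hq.2).const_mul 2)).mul_const (sin q.2)

lemma hasDerivAt_integral_dens (hM : 0 < M) (hψ : IsKerrWaveSol M ψ) (v : ℝ) :
    HasDerivAt (fun v => ∫ q in sph, dens M ψ v q) 0 v := by
  obtain ⟨B, hB⟩ := exists_densDeriv_bound hM hψ
  rw [← integral_densDeriv hM hψ v]
  refine (hasDerivAt_integral_of_dominated_loc_of_deriv_le (bound := fun _ => B) univ_mem
    (Eventually.of_forall fun w => (integrableOn_dens hM hψ w).aestronglyMeasurable)
    (integrableOn_dens hM hψ v) (integrableOn_densDeriv hM hψ v).aestronglyMeasurable ?_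
    (integrableOn_const sph_finite.ne) ?_).2
  · exact ae_restrict_of_forall_mem measurableSet_sph fun q hq w _ => hB w q hq
  · exact ae_restrict_of_forall_mem measurableSet_sph fun q hq w _ => hasDerivAt_dens hM hψ w hq

end

/-- **The conserved quantity along the extremal Kerr horizon.** For every solution
`ψ` of the wave equation on extremal Kerr of mass `M > 0`, the function
`v ↦ ∫₀^{2π}∫₀^π (M sin²θ ∂ᵥψ + 4M ∂ᵣψ + 2ψ)(v, M, θ, φ) sinθ dθ dφ` is constant
on `ℝ`; in particular it equals `H₀[ψ]` for all `v`. -/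
theorem conserved_quantity_extremal_Kerr
    (M : ℝ) (hM : 0 < M) (ψ : ℝ → ℝ → ℝ → ℝ → ℝ) (hψ : IsKerrWaveSol M ψ) :
    ∀ v : ℝ,
      (∫ φ in (0:ℝ)..(2 * π), ∫ θ in (0:ℝ)..π,
        (M * sin θ ^ 2 * pder 0 ψ v M θ φ + 4 * M * pder 1 ψ v M θ φ + 2 * ψ v M θ φ)
          * sin θ) = H0Kerr M ψ := by
  intro v
  have h := is_const_of_deriv_eq_zero
    (fun w => (hasDerivAt_integral_dens hM hψ w).differentiableAt)
    (fun w => (hasDerivAt_integral_dens hM hψ w).deriv) v 0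
  rw [integral_sph (integrableOn_dens hM hψ v), integral_sph (integrableOn_dens hM hψ 0)] at h
  exact h
end
end
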